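/- Propagation of lower bounds without smallness of the drift: Let α > 0 and r > 0, and set Q := B_r(0) × (−r², (α−1)r²). Suppose u ∈ C^{2,1} on an open set containing the closure of Q satisfies −u_t + Lu ≤ 0 and u > 0 at every point of Q, and u ≥ ℓ on B_r(0) × {−r²} for some ℓ > 0. Then u ≥ C·ℓ on B_{r/2}(0) × {(α−1)r²}, and in particular u(0, (α−1)r²) ≥ C·ℓ, where C is a positive constant depending only on n, ν, S and α. -/

import Mathlib

open MeasureTheory ENNReal Metric Set RealInnerProductSpace

noncomputable section

/-- `n`-dimensional Euclidean space. -/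
abbrev En (n : ℕ) : Type := EuclideanSpace ℝ (Fin n)

variable {n : ℕ}

/-- Time derivative `u_t`. -/
def Dt (u : En n × ℝ → ℝ) (X : En n × ℝ) : ℝ :=
  deriv (fun t => u (X.1, t)) X.2

/-- First spatial derivative `D_i u`. -/
def Dx (u : En n × ℝ → ℝ) (i : Fin n) (X : En n × ℝ) : ℝ :=
  fderiv ℝ (fun x => u (x, X.2)) X.1 (EuclideanSpace.single i 1)

/-- Second spatial derivative `D_{ij} u`. -/
def Dxx (u : En n × ℝ → ℝ) (i j : Fin n) (X : En n × ℝ) : ℝ :=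
  Dx (Dx u j) i X

/-- `u` is of class `C^{2,1}` on `Q`: `u`, `D_i u`, `D_{ij} u`, `u_t` exist and are
continuous on `Q`. -/
structure IsC21 (u : En n × ℝ → ℝ) (Q : Set (En n × ℝ)) : Prop where
  cont : ContinuousOn u Q
  diff_t : ∀ X ∈ Q, DifferentiableAt ℝ (fun t => u (X.1, t)) X.2
  diff_x : ∀ X ∈ Q, DifferentiableAt ℝ (fun x => u (x, X.2)) X.1
  diff_xx : ∀ j : Fin n, ∀ X ∈ Q, DifferentiableAt ℝ (fun x => Dx u j (x, X.2)) X.1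
  cont_t : ContinuousOn (Dt u) Q
  cont_x : ∀ i, ContinuousOn (Dx u i) Q
  cont_xx : ∀ i j, ContinuousOn (Dxx u i j) Q

/-- Uniform parabolicity with constant `ν` on `Q`:
`ν⁻¹|ξ|² ≤ Σ a_ij ξ_i ξ_j` and `Σ a_ij² ≤ ν²`. -/
def UnifParabolic (ν : ℝ) (a : En n × ℝ → Matrix (Fin n) (Fin n) ℝ)
    (Q : Set (En n × ℝ)) : Prop :=
  ∀ X ∈ Q, (∀ ξ : Fin n → ℝ, ν⁻¹ * (∑ i, ξ i ^ 2) ≤ ∑ i, ∑ j, a X i j * ξ i * ξ j) ∧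
    (∑ i, ∑ j, (a X i j) ^ 2) ≤ ν ^ 2

/-- `Lu = Σ_{ij} a_ij D_ij u + Σ_i b_i D_i u`. -/
def Lop (a : En n × ℝ → Matrix (Fin n) (Fin n) ℝ) (b : En n × ℝ → En n)
    (u : En n × ℝ → ℝ) (X : En n × ℝ) : ℝ :=
  (∑ i, ∑ j, a X i j * Dxx u i j X) + ∑ i, b X i * Dx u i X

/-- `∫ (ess sup_t |f(x,t)|)ⁿ dx`, the `n`-th power of the `L^n_x L^∞_t` norm of `f`
over the set `Q ⊆ ℝⁿ × ℝ`. -/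
def LxnLtinfPow {E : Type*} [NNNorm E] (f : En n × ℝ → E) (Q : Set (En n × ℝ)) : ℝ≥0∞ :=
  ∫⁻ x, (essSup (fun t => (‖f (x, t)‖₊ : ℝ≥0∞)) (volume.restrict {t | (x, t) ∈ Q})) ^ n

/-- The `L^n_x L^∞_t` norm of `f` over `Q`. -/
def LxnLtinf {E : Type*} [NNNorm E] (f : En n × ℝ → E) (Q : Set (En n × ℝ)) : ℝ≥0∞ :=
  (LxnLtinfPow f Q) ^ (1 / (n : ℝ))

/-- The box `B_ρ(y) × (t₁, t₂)`. -/
def box (y : En n) (ρ t₁ t₂ : ℝ) : Set (En n × ℝ) := ball y ρ ×ˢ Ioo t₁ t₂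

/-- The standard parabolic cylinder `Q_r(Y) = B_r(y) × (s - r², s)`. -/
def pcyl (Y : En n × ℝ) (r : ℝ) : Set (En n × ℝ) := box Y.1 r (Y.2 - r ^ 2) Y.2

/-- The slanted cylinder `V_r(Y) = {(x,t) : |x - (t/s)y| < r, 0 < t < s}`. -/
def slantCyl (Y : En n × ℝ) (r : ℝ) : Set (En n × ℝ) :=
  {X | ‖X.1 - (X.2 / Y.2) • Y.1‖ < r ∧ 0 < X.2 ∧ X.2 < Y.2}

/-- Supremum of the positive part `u₊` over a set `A`. -/
def supPos (u : En n × ℝ → ℝ) (A : Set (En n × ℝ)) : ℝ :=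
  sSup ((fun X => max (u X) 0) '' A)

/-- `Ω` is a Lipschitz domain with character `(rΩ, mΩ)`: at every boundary point `y`
there is a coordinate frame, encoded by the unit "vertical" direction `e`, in which
`Ω ∩ B_{rΩ}(y)` is the region above the graph of an `mΩ`-Lipschitz function `φ`
of the tangential variables. -/
def IsLipschitzDomain (Ω : Set (En n)) (rΩ mΩ : ℝ) : Prop :=
  0 < rΩ ∧ 0 ≤ mΩ ∧
  ∀ y ∈ frontier Ω, ∃ (e : En n) (φ : En n → ℝ),
    ‖e‖ = 1 ∧ LipschitzWith (Real.toNNReal mΩ) φ ∧ φ 0 = 0 ∧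
    (∀ x, x ∈ Ω ∩ ball y rΩ ↔
      dist x y < rΩ ∧ φ ((x - y) - ⟪x - y, e⟫ • e) < ⟪x - y, e⟫) ∧
    (∀ ρ : ℝ, 0 < ρ → ρ ≤ rΩ → y + ρ • e ∈ Ω)


/-! ### Measure-theoretic part -/

open scoped NNReal Topology in
lemma vol_le_of_antilip (T : Set (En n)) (X : En n → En n) (K : ℝ≥0)
    (h : ∀ y ∈ T, ∀ y' ∈ T, dist y y' ≤ K * dist (X y) (X y')) :
    volume T ≤ (K : ℝ≥0∞) ^ n * volume (X '' T) := by
  classical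
  have hfin : Module.finrank ℝ (En n) = n := by simp
  obtain ⟨c, hc0, hct, hc⟩ : ∃ c : ℝ≥0∞, c ≠ 0 ∧ c ≠ ∞ ∧
      ∀ s : Set (En n), (Measure.hausdorffMeasure (n : ℝ) : Measure (En n)) s = c * volume s := by
    have hH : Measure.IsAddHaarMeasure (Measure.hausdorffMeasure (n : ℝ) : Measure (En n)) := by
      have := MeasureTheory.isAddHaarMeasure_hausdorffMeasure (E := En n)
      rwa [hfin] at this
    have he := Measure.isAddLeftInvariant_eq_smul
      (Measure.hausdorffMeasure (n : ℝ) : Measure (En n)) volume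
    refine ⟨Measure.addHaarScalarFactor
      (Measure.hausdorffMeasure (n : ℝ) : Measure (En n)) volume, ?_, by simp, ?_⟩
    · have := Measure.addHaarScalarFactor_pos_of_isAddHaarMeasure
        (Measure.hausdorffMeasure (n : ℝ) : Measure (En n)) volume
      exact_mod_cast this.ne'
    · intro s
      exact (congrArg (fun m : Measure (En n) => m s) he).trans
        (Measure.coe_nnreal_smul_apply _ _ _)
  have hinj : Set.InjOn X T := by
    intro y hy y' hy' he
    have := h y hy y' hy'
    rw [he, dist_self, mul_zero] at this
    exact dist_le_zero.1 this
  have hL : LipschitzOnWith K (Function.invFunOn X T) (X '' T) := by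
    apply LipschitzOnWith.of_dist_le_mul
    rintro _ ⟨y, hy, rfl⟩ _ ⟨y', hy', rfl⟩
    rw [hinj.leftInvOn_invFunOn hy, hinj.leftInvOn_invFunOn hy']
    exact h y hy y' hy'
  have himg : Function.invFunOn X T '' (X '' T) = T := by
    exact hinj.invFunOn_image subset_rfl
  have := hL.hausdorffMeasure_image_le (d := (n : ℝ)) (by positivity)
  rw [himg, hc, hc, ENNReal.rpow_natCast] at this
  rw [mul_left_comm] at this
  exact (ENNReal.mul_le_mul_iff_right hc0 hct).1 this

open scoped NNReal in
lemma vol_le_of_local_antilip (T A : Set (En n)) (hA : MeasurableSet A) (X : En n → En n)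
    (hX : ∀ y ∈ T, X y ∈ A) (K : ℝ≥0)
    (h : ∀ y ∈ T, ∃ ρ : ℝ, 0 < ρ ∧ ∀ y' ∈ T, dist (X y) (X y') < ρ →
      dist y y' ≤ K * dist (X y) (X y')) :
    volume T ≤ (K : ℝ≥0∞) ^ n * volume A := by
  choose! ρ hρ0 hρ using h
  let Tk : ℕ → Set (En n) := fun k => {y ∈ T | 1 / ((k : ℝ) + 1) ≤ ρ y}
  have hT : T = ⋃ k, Tk k := by
    ext y
    simp only [mem_iUnion, Tk, mem_ofPred_eq]
    constructor
    · intro hy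
      obtain ⟨k, hk⟩ := exists_nat_one_div_lt (hρ0 y hy)
      exact ⟨k, hy, hk.le⟩
    · rintro ⟨k, hy, _⟩
      exact hy
  have hmono : Monotone Tk := by
    intro k l hkl y hy
    refine ⟨hy.1, le_trans ?_ hy.2⟩
    apply one_div_le_one_div_of_le
    · positivity
    · have : (k : ℝ) ≤ l := by exact_mod_cast hkl
      linarith
  rw [hT, hmono.measure_iUnion]
  refine iSup_le fun k => ?_
  -- small pieces
  have hk : (0 : ℝ) < 1 / ((k : ℝ) + 1) / 2 := by positivity
  let B : ℕ → Set (En n) := fun i => ball (TopologicalSpace.denseSeq (En n) i) (1 / ((k : ℝ) + 1) / 2)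
  have hBm : ∀ i, MeasurableSet (disjointed B i) := fun i =>
    MeasurableSet.disjointed (fun i => measurableSet_ball) i
  have hBU : ⋃ i, disjointed B i = univ := by
    rw [iUnion_disjointed, eq_univ_iff_forall]
    intro x
    obtain ⟨i, hi⟩ := (TopologicalSpace.denseRange_denseSeq (En n)).exists_dist_lt x hk
    exact mem_iUnion.2 ⟨i, hi⟩
  have hpiece : ∀ i, volume (Tk k ∩ X ⁻¹' disjointed B i) ≤
      (K : ℝ≥0∞) ^ n * volume (A ∩ disjointed B i) := by
    intro i
    refine (vol_le_of_antilip _ X K ?_).trans ?_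
    · rintro y ⟨hy, hyB⟩ y' ⟨hy', hyB'⟩
      apply hρ y hy.1 y' hy'.1
      have h1 := disjointed_subset B i hyB
      have h2 := disjointed_subset B i hyB'
      simp only [B, mem_ball] at h1 h2
      have := dist_triangle_right (X y) (X y') (TopologicalSpace.denseSeq (En n) i)
      linarith [hy.2]
    · gcongr
      rintro _ ⟨y, ⟨hy, hyB⟩, rfl⟩
      exact ⟨hX y hy.1, hyB⟩
  calc volume (Tk k) = volume (⋃ i, Tk k ∩ X ⁻¹' disjointed B i) := by
        rw [← inter_iUnion, ← preimage_iUnion, hBU]; simp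
    _ ≤ ∑' i, volume (Tk k ∩ X ⁻¹' disjointed B i) := measure_iUnion_le _
    _ ≤ ∑' i, (K : ℝ≥0∞) ^ n * volume (A ∩ disjointed B i) := ENNReal.tsum_le_tsum hpiece
    _ = (K : ℝ≥0∞) ^ n * ∑' i, volume (A ∩ disjointed B i) := ENNReal.tsum_mul_left
    _ = (K : ℝ≥0∞) ^ n * volume A := by
        rw [← measure_iUnion, ← inter_iUnion, hBU, inter_univ]
        · intro i j hij
          exact (disjoint_disjointed B hij).mono inter_subset_right inter_subset_right
        · exact fun i => hA.inter (hBm i)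

open scoped NNReal in
lemma vol_le_lintegral (hn : 0 < n) (T D : Set (En n)) (hD : MeasurableSet D) (X : En n → En n)
    (hX : ∀ y ∈ T, X y ∈ D) (L : En n → ℝ≥0∞) (hL : Measurable L)
    (hfin : ∫⁻ x in D, L x ^ n ≠ ∞)
    (h : ∀ y ∈ T, ∃ K : ℝ≥0, 1 ≤ K ∧ (K : ℝ≥0∞) ≤ L (X y) ∧
      ∃ ρ : ℝ, 0 < ρ ∧ ∀ y' ∈ T, dist (X y) (X y') < ρ → dist y y' ≤ K * dist (X y) (X y')) :
    volume T ≤ 2 ^ n * ∫⁻ x in D, L x ^ n := by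
  choose! K hK1 hKL hK using h
  -- levels
  let A : ℕ → Set (En n) := fun j => D ∩ L ⁻¹' Ico ((2 : ℝ≥0∞) ^ j) (2 ^ (j + 1))
  let Ai : Set (En n) := D ∩ L ⁻¹' {∞}
  have hAm : ∀ j, MeasurableSet (A j) := fun j => hD.inter (hL measurableSet_Ico)
  have hAim : MeasurableSet Ai := hD.inter (hL (measurableSet_singleton _))
  have hAd : Pairwise (Function.onFun Disjoint A) := by
    intro i j hij
    rw [Function.onFun, Set.disjoint_left]
    rintro x ⟨_, hi1, hi2⟩ ⟨_, hj1, hj2⟩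
    rcases lt_or_gt_of_ne hij with hlt | hlt
    · have : (2 : ℝ≥0∞) ^ (i + 1) ≤ 2 ^ j := pow_le_pow_right₀ (by norm_num) hlt
      exact absurd (hi2.trans_le (this.trans hj1)) (lt_irrefl _)
    · have : (2 : ℝ≥0∞) ^ (j + 1) ≤ 2 ^ i := pow_le_pow_right₀ (by norm_num) hlt
      exact absurd (hj2.trans_le (this.trans hi1)) (lt_irrefl _)
  have hAi0 : volume Ai = 0 := by
    have h1 : ∀ᵐ x ∂(volume.restrict D), L x ^ n < ∞ :=
      ae_lt_top (hL.pow_const n) hfin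
    rw [ae_restrict_iff' hD] at h1
    refine measure_mono_null ?_ h1
    rintro x ⟨hx, hx'⟩
    simp only [mem_preimage, mem_singleton_iff] at hx'
    simp [hx, hx', hn.ne']
  have hTi : volume {y ∈ T | X y ∈ Ai} = 0 := by
    have : {y ∈ T | X y ∈ Ai} ⊆ ⋃ m : ℕ, {y ∈ T | X y ∈ Ai ∧ K y ≤ m} := by
      rintro y ⟨hy, hy'⟩
      obtain ⟨m, hm⟩ := exists_nat_ge (K y)
      exact mem_iUnion.2 ⟨m, hy, hy', hm⟩
    refine measure_mono_null this (measure_iUnion_null fun m => ?_)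
    have := vol_le_of_local_antilip {y ∈ T | X y ∈ Ai ∧ K y ≤ m} Ai hAim X (fun y hy => hy.2.1)
      (m : ℝ≥0) ?_
    · rw [hAi0, mul_zero] at this
      exact le_antisymm this bot_le
    · intro y hy
      obtain ⟨ρ, hρ, hρ'⟩ := hK y hy.1
      refine ⟨ρ, hρ, fun y' hy' hd => (hρ' y' hy'.1 hd).trans ?_⟩
      gcongr
      exact_mod_cast hy.2.2
  have hTj : ∀ j, volume {y ∈ T | X y ∈ A j} ≤ ∫⁻ x in A j, 2 ^ n * L x ^ n := by
    intro j
    have h1 := vol_le_of_local_antilip {y ∈ T | X y ∈ A j} (A j) (hAm j) X (fun y hy => hy.2)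
      ((2 : ℝ≥0) ^ (j + 1)) ?_
    · refine h1.trans ?_
      rw [← setLIntegral_const]
      refine setLIntegral_mono ((hL.pow_const n).const_mul _) ?_
      rintro x ⟨_, hx1, _⟩
      rw [← mul_pow]
      gcongr
      push_cast
      rw [pow_succ, mul_comm]
      gcongr
    · intro y hy
      obtain ⟨ρ, hρ, hρ'⟩ := hK y hy.1
      refine ⟨ρ, hρ, fun y' hy' hd => (hρ' y' hy'.1 hd).trans ?_⟩
      gcongr
      have h2 : (K y : ℝ≥0∞) ≤ ((2 : ℝ≥0) ^ (j + 1) : ℝ≥0) := by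
        push_cast
        exact (hKL y hy.1).trans hy.2.2.2.le
      exact_mod_cast h2
  have hcover : T ⊆ {y ∈ T | X y ∈ Ai} ∪ ⋃ j, {y ∈ T | X y ∈ A j} := by
    intro y hy
    by_cases htop : L (X y) = ∞
    · exact Or.inl ⟨hy, hX y hy, htop⟩
    · right
      have h1 : (1 : ℝ≥0∞) ≤ L (X y) := le_trans (by exact_mod_cast hK1 y hy) (hKL y hy)
      lift L (X y) to ℝ≥0 using htop with l hl
      have h1' : (1 : ℝ≥0) ≤ l := by exact_mod_cast h1
      obtain ⟨j, hj1, hj2⟩ := exists_nat_pow_near h1' (one_lt_two)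
      refine mem_iUnion.2 ⟨j, hy, hX y hy, ?_, ?_⟩
      · rw [← hl]; exact_mod_cast hj1
      · rw [← hl]; exact_mod_cast hj2
  calc volume T ≤ volume {y ∈ T | X y ∈ Ai} + volume (⋃ j, {y ∈ T | X y ∈ A j}) :=
        (measure_mono hcover).trans (measure_union_le _ _)
    _ ≤ 0 + ∑' j, ∫⁻ x in A j, 2 ^ n * L x ^ n := by
        gcongr
        · exact hTi.le
        · exact (measure_iUnion_le _).trans (ENNReal.tsum_le_tsum hTj)
    _ = ∫⁻ x in ⋃ j, A j, 2 ^ n * L x ^ n := by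
        rw [zero_add, lintegral_iUnion hAm hAd]
    _ ≤ ∫⁻ x in D, 2 ^ n * L x ^ n :=
        lintegral_mono_set (iUnion_subset fun j => inter_subset_left)
    _ = 2 ^ n * ∫⁻ x in D, L x ^ n := lintegral_const_mul _ (hL.pow_const n)


/-! ### Calculus part -/

open scoped Topology in
lemma taylor2 {f : En n → ℝ} {f' : En n → En n →L[ℝ] ℝ} {f'' : En n →L[ℝ] En n →L[ℝ] ℝ} {x : En n}
    (hf : ∀ᶠ z in 𝓝 x, HasFDerivAt f (f' z) z) (hx : HasFDerivAt f' f'' x) (h0 : f' x = 0)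
    {η : ℝ} (hη : 0 < η) :
    ∀ᶠ z in 𝓝 x, |f z - f x - 1 / 2 * f'' (z - x) (z - x)| ≤ η * ‖z - x‖ ^ 2 := by
  have hs := fun v w => second_derivative_symmetric_of_eventually hf hx v w
  have h1 := hx.isLittleO.def hη
  obtain ⟨δ, hδ, hball⟩ := Metric.eventually_nhds_iff_ball.1 (hf.and h1)
  refine Metric.eventually_nhds_iff_ball.2 ⟨δ, hδ, fun z hz => ?_⟩
  have hsub : ∀ w ∈ closedBall x ‖z - x‖, w ∈ ball x δ := by
    intro w hw
    rw [mem_closedBall] at hw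
    rw [mem_ball, dist_eq_norm] at hz
    exact mem_ball.2 (hw.trans_lt hz)
  have key := (convex_closedBall x ‖z - x‖).norm_image_sub_le_of_norm_hasFDerivWithin_le
    (f := fun w => f w - 1 / 2 * f'' (w - x) (w - x))
    (f' := fun w => f' w - f'' (w - x)) (C := η * ‖z - x‖) (x := x) (y := z) ?_ ?_
    (mem_closedBall_self (norm_nonneg _)) (by rw [mem_closedBall, dist_eq_norm])
  · simp only [sub_self, map_zero, mul_zero, sub_zero, Real.norm_eq_abs] at key
    convert key using 1
    · congr 1; ring
    · ring
  · intro w hw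
    have hw1 := (hball w (hsub w hw)).1
    have hq : HasFDerivAt (fun w => f'' (w - x) (w - x))
        ((f'' (w - x)).comp (ContinuousLinearMap.id ℝ (En n)) +
          (f''.comp (ContinuousLinearMap.id ℝ (En n))).flip (w - x)) w := by
      have e1 : HasFDerivAt (fun w : En n => w - x) (ContinuousLinearMap.id ℝ (En n)) w :=
        (hasFDerivAt_id w).sub_const x
      exact (f''.hasFDerivAt.comp w e1).clm_apply e1
    have := hw1.sub (hq.const_mul (1 / 2 : ℝ))
    refine (this.congr_fderiv ?_).hasFDerivWithinAt
    ext v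
    simp
    linarith [hs v w, hs v x]
  · intro w hw
    have hw1 := (hball w (hsub w hw)).2
    rw [h0, sub_zero] at hw1
    refine hw1.trans ?_
    gcongr
    rw [mem_closedBall, dist_eq_norm] at hw
    exact hw

open scoped Topology in
lemma snd_nonneg_of_localMin {f : En n → ℝ} {f' : En n → En n →L[ℝ] ℝ}
    {f'' : En n →L[ℝ] En n →L[ℝ] ℝ} {x : En n}
    (hf : ∀ᶠ z in 𝓝 x, HasFDerivAt f (f' z) z) (hx : HasFDerivAt f' f'' x) (h0 : f' x = 0)
    (hmin : ∀ᶠ z in 𝓝 x, f x ≤ f z) (k : En n) : 0 ≤ f'' k k := by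
  by_contra! hneg
  have hη : 0 < -(f'' k k) / (4 * (‖k‖ ^ 2 + 1)) := by
    apply div_pos (by linarith); positivity
  have hev := (taylor2 hf hx h0 hη).and hmin
  have hcont : Filter.Tendsto (fun s : ℝ => x + s • k) (𝓝[>] 0) (𝓝 x) := by
    have : Continuous fun s : ℝ => x + s • k := by fun_prop
    have h2 := this.tendsto 0
    simp only [zero_smul, add_zero] at h2
    exact h2.mono_left nhdsWithin_le_nhds
  obtain ⟨s, hs, hs0⟩ := ((hcont.eventually hev).and self_mem_nhdsWithin).exists
  have hs0 : 0 < s := hs0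
  obtain ⟨h1, h2⟩ := hs
  simp only [add_sub_cancel_left, map_smul, _root_.smul_apply, smul_eq_mul,
    norm_smul, Real.norm_eq_abs, abs_of_pos hs0] at h1
  have h3 := (abs_le.1 h1).2
  have h4 : -(f'' k k) / (4 * (‖k‖ ^ 2 + 1)) * (s * ‖k‖) ^ 2 ≤ -(f'' k k) / 4 * s ^ 2 := by
    rw [div_mul_eq_mul_div, div_le_iff₀ (by positivity)]
    nlinarith [mul_pos (neg_pos.2 hneg) (pow_pos hs0 2), sq_nonneg ‖k‖]
  nlinarith [mul_pos (neg_pos.2 hneg) (pow_pos hs0 2)]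

lemma sum_single (v : En n) : v = ∑ i, v i • (EuclideanSpace.single i (1 : ℝ) : En n) := by
  ext j
  simp [Finset.sum_apply, Pi.single_apply]

open scoped Topology in
lemma c21_first {u : En n × ℝ → ℝ} (X : En n × ℝ) (v : En n) :
    fderiv ℝ (fun x => u (x, X.2)) X.1 v = ∑ i, Dx u i X * v i := by
  conv_lhs => rw [sum_single v]
  rw [map_sum]
  refine Finset.sum_congr rfl fun i _ => ?_
  rw [map_smul, smul_eq_mul, mul_comm]
  rfl

open scoped Topology in
lemma c21_slice {u : En n × ℝ → ℝ} {O : Set (En n × ℝ)} (hO : IsOpen O) (hu : IsC21 u O)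
    {X : En n × ℝ} (hX : X ∈ O) :
    (∀ᶠ z in 𝓝 X.1, HasFDerivAt (fun x => u (x, X.2)) (fderiv ℝ (fun x => u (x, X.2)) z) z) ∧
    ∃ f'' : En n →L[ℝ] En n →L[ℝ] ℝ,
      HasFDerivAt (fderiv ℝ (fun x => u (x, X.2))) f'' X.1 ∧
      ∀ v w, f'' v w = ∑ i, ∑ j, Dxx u i j X * v i * w j := by
  constructor
  · have : ∀ᶠ z in 𝓝 X.1, (z, X.2) ∈ O := by
      have hc : Continuous fun z : En n => (z, X.2) := by fun_prop
      exact hc.continuousAt.eventually (hO.mem_nhds hX)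
    filter_upwards [this] with z hz
    exact (hu.diff_x _ hz).hasFDerivAt
  · refine ⟨∑ j, (fderiv ℝ (fun x => Dx u j (x, X.2)) X.1).smulRight
      (EuclideanSpace.proj j : En n →L[ℝ] ℝ), ?_, ?_⟩
    · have e : fderiv ℝ (fun x => u (x, X.2)) =
          fun z => ∑ j, Dx u j (z, X.2) • (EuclideanSpace.proj j : En n →L[ℝ] ℝ) := by
        funext z
        ext v
        have := c21_first (u := u) (z, X.2) v
        simp only at this
        rw [this]
        simp
      rw [e]
      apply HasFDerivAt.fun_sum
      intro j _
      exact HasFDerivAt.smul_const (hu.diff_xx j X hX).hasFDerivAt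
        (EuclideanSpace.proj j : En n →L[ℝ] ℝ)
    · intro v w
      have e : ∀ j, fderiv ℝ (fun x => Dx u j (x, X.2)) X.1 v = ∑ i, Dxx u i j X * v i :=
        fun j => c21_first (u := Dx u j) X v
      simp only [_root_.sum_apply, ContinuousLinearMap.smulRight_apply, e,
        _root_.smul_apply, smul_eq_mul]
      rw [Finset.sum_comm]
      refine Finset.sum_congr rfl fun j _ => ?_
      rw [Finset.sum_mul]
      exact Finset.sum_congr rfl fun _ _ => rfl

lemma c21_symm {u : En n × ℝ → ℝ} {O : Set (En n × ℝ)} (hO : IsOpen O) (hu : IsC21 u O)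
    {X : En n × ℝ} (hX : X ∈ O) (i j : Fin n) : Dxx u i j X = Dxx u j i X := by
  obtain ⟨h1, f'', h2, h3⟩ := c21_slice hO hu hX
  have := second_derivative_symmetric_of_eventually h1 h2 (EuclideanSpace.single i 1)
    (EuclideanSpace.single j 1)
  rw [h3, h3] at this
  simpa [Pi.single_apply] using this

lemma deriv_nonpos_of_left {f : ℝ → ℝ} {f' t t₀ : ℝ} (h : HasDerivAt f f' t) (ht : t₀ < t)
    (hmin : ∀ s, t₀ ≤ s → s ≤ t → f t ≤ f s) : f' ≤ 0 := by
  have h1 := h.hasDerivWithinAt (s := Iio t)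
  rw [hasDerivWithinAt_iff_tendsto_slope' (by simp)] at h1
  refine le_of_tendsto h1 ?_
  filter_upwards [Ioo_mem_nhdsLT ht] with s hs
  rw [slope_def_field]
  apply div_nonpos_of_nonneg_of_nonpos
  · linarith [hmin s hs.1.le hs.2.le]
  · linarith [hs.2]

/-! ### Matrix part -/

lemma psd_bound (N A : Matrix (Fin n) (Fin n) ℝ) (ν : ℝ) (hν : 1 ≤ ν)
    (hsym : ∀ i j, N i j = N j i)
    (hpos : ∀ k : Fin n → ℝ, 0 ≤ ∑ i, ∑ j, N i j * k i * k j)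
    (hA : ∀ ξ : Fin n → ℝ, ν⁻¹ * (∑ i, ξ i ^ 2) ≤ ∑ i, ∑ j, A i j * ξ i * ξ j) :
    0 ≤ ∑ i, ∑ j, A i j * N i j ∧
    ∀ k : Fin n → ℝ, ∑ i, ∑ j, N i j * k i * k j ≤
      ν * (∑ i, ∑ j, A i j * N i j) * ∑ i, k i ^ 2 := by
  have hpsd : N.PosSemidef := by
    refine Matrix.PosSemidef.of_dotProduct_mulVec_nonneg ?_ ?_
    · ext i j; simp [Matrix.conjTranspose_apply, hsym i j]
    · intro k
      have := hpos k
      simp only [dotProduct, Matrix.mulVec, Finset.mul_sum, star_trivial]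
      refine le_of_le_of_eq this ?_
      exact Finset.sum_congr rfl fun i _ => Finset.sum_congr rfl fun j _ => by ring
  obtain ⟨m, v, hv⟩ := Matrix.posSemidef_iff_eq_sum_vecMulVec.1 hpsd
  have hN : ∀ i j, N i j = ∑ l, v l i * v l j := by
    intro i j
    rw [hv, Matrix.sum_apply]
    simp [Matrix.vecMulVec_apply]
  have hAN : ∑ i, ∑ j, A i j * N i j = ∑ l, ∑ i, ∑ j, A i j * v l i * v l j := by
    simp only [hN, Finset.mul_sum]
    rw [Finset.sum_comm]
    have : ∀ j, (∑ i, ∑ l, A i j * (v l i * v l j)) = ∑ l, ∑ i, A i j * v l i * v l j := by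
      intro j
      rw [Finset.sum_comm]
      simp only [mul_assoc]
    simp only [this]
    rw [Finset.sum_comm]
    refine Finset.sum_congr rfl fun l _ => ?_
    rw [Finset.sum_comm]
  have hlow : ∑ l, ∑ i, v l i ^ 2 ≤ ν * ∑ i, ∑ j, A i j * N i j := by
    rw [hAN, Finset.mul_sum]
    refine Finset.sum_le_sum fun l _ => ?_
    have := hA (v l)
    rw [inv_mul_le_iff₀ (by linarith)] at this
    exact this
  constructor
  · have h0 : (0 : ℝ) ≤ ∑ l, ∑ i, v l i ^ 2 := by positivity
    have : 0 ≤ ν * ∑ i, ∑ j, A i j * N i j := h0.trans hlow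
    exact nonneg_of_mul_nonneg_right this (by linarith)
  · intro k
    have hk : ∑ i, ∑ j, N i j * k i * k j = ∑ l, (∑ i, v l i * k i) ^ 2 := by
      simp only [hN, Finset.sum_mul, sq]
      have : ∀ i, (∑ j, ∑ l, v l i * v l j * k i * k j) = ∑ l, ∑ j, v l i * k i * (v l j * k j) := by
        intro i
        rw [Finset.sum_comm]
        refine Finset.sum_congr rfl fun l _ => Finset.sum_congr rfl fun j _ => by ring
      simp only [this]
      rw [Finset.sum_comm]
      refine Finset.sum_congr rfl fun l _ => Finset.sum_congr rfl fun i _ => ?_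
      rw [Finset.mul_sum]
    rw [hk]
    calc ∑ l, (∑ i, v l i * k i) ^ 2 ≤ ∑ l, (∑ i, v l i ^ 2) * ∑ i, k i ^ 2 :=
          Finset.sum_le_sum fun l _ => Finset.sum_mul_sq_le_sq_mul_sq _ _ _
      _ = (∑ l, ∑ i, v l i ^ 2) * ∑ i, k i ^ 2 := by rw [Finset.sum_mul]
      _ ≤ _ := by gcongr

lemma trace_bound (A : Matrix (Fin n) (Fin n) ℝ) (ν : ℝ) (hν : 1 ≤ ν)
    (hA : (∑ i, ∑ j, (A i j) ^ 2) ≤ ν ^ 2) : ∑ i, A i i ≤ n * ν := by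
  calc ∑ i, A i i ≤ ∑ _i : Fin n, ν := by
        refine Finset.sum_le_sum fun i _ => ?_
        refine abs_le_of_sq_le_sq' ?_ (by linarith) |>.2
        refine le_trans ?_ hA
        calc A i i ^ 2 ≤ ∑ j, A i j ^ 2 :=
              Finset.single_le_sum (f := fun j => A i j ^ 2) (fun j _ => sq_nonneg _)
                (Finset.mem_univ i)
          _ ≤ _ := Finset.single_le_sum (f := fun i => ∑ j, A i j ^ 2)
                (fun i _ => Finset.sum_nonneg fun j _ => sq_nonneg _) (Finset.mem_univ i)
    _ = n * ν := by simp

/-- The basic pointwise estimate at a contact point. -/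
lemma contact_bound (A H : Matrix (Fin n) (Fin n) ℝ) (ν ρ c d b ut s : ℝ) (e : Fin n → ℝ)
    (hν : 1 ≤ ν) (hρ : 0 < ρ) (hc : 0 < c) (hd : 0 < d) (hs : 0 ≤ s)
    (hse : s ^ 2 = ∑ i, e i ^ 2) (hds : d = ρ ^ 2 - s ^ 2)
    (hA : ∀ ξ : Fin n → ℝ, ν⁻¹ * (∑ i, ξ i ^ 2) ≤ ∑ i, ∑ j, A i j * ξ i * ξ j)
    (hA2 : (∑ i, ∑ j, (A i j) ^ 2) ≤ ν ^ 2)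
    (hsym : ∀ i j, H i j = H j i)
    (hut : ut ≤ -((((n : ℝ) * ν + 1) ^ 2 * ν + 1) / ρ ^ 2 * (c * d ^ 2)))
    (heq : (∑ i, ∑ j, A i j * H i j) - b * (4 * c * d * s) ≤ ut)
    (hpos : ∀ k : Fin n → ℝ, 0 ≤ (∑ i, ∑ j, H i j * k i * k j)
      - c * (8 * (∑ i, e i * k i) ^ 2 - 4 * d * ∑ i, k i ^ 2)) :
    0 < s ∧ 1 ≤ ν * ρ * b ∧
    ∀ k : Fin n → ℝ, (∑ i, ∑ j, H i j * k i * k j)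
      - c * (8 * (∑ i, e i * k i) ^ 2 - 4 * d * ∑ i, k i ^ 2) ≤
        4 * ν * c * b * d * s * ∑ i, k i ^ 2 := by
  let N : Matrix (Fin n) (Fin n) ℝ := fun i j => H i j - c * (8 * (e i * e j) -
    if i = j then 4 * d else 0)
  have hNk : ∀ k : Fin n → ℝ, ∑ i, ∑ j, N i j * k i * k j = (∑ i, ∑ j, H i j * k i * k j)
      - c * (8 * (∑ i, e i * k i) ^ 2 - 4 * d * ∑ i, k i ^ 2) := by
    intro k
    have e1 : (∑ i, e i * k i) ^ 2 = ∑ i, ∑ j, (e i * e j) * k i * k j := by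
      rw [sq, Finset.sum_mul_sum]
      exact Finset.sum_congr rfl fun i _ => Finset.sum_congr rfl fun j _ => by ring
    have e2 : 4 * d * ∑ i, k i ^ 2 = ∑ i, ∑ j, (if i = j then 4 * d else 0) * k i * k j := by
      rw [Finset.mul_sum]
      refine Finset.sum_congr rfl fun i _ => ?_
      simp [ite_mul]
      ring
    rw [e1, e2]
    simp only [Finset.mul_sum, ← Finset.sum_sub_distrib]
    refine Finset.sum_congr rfl fun i _ => Finset.sum_congr rfl fun j _ => ?_
    simp only [N]; ring
  have hAN : ∑ i, ∑ j, A i j * N i j = (∑ i, ∑ j, A i j * H i j)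
      - c * (8 * (∑ i, ∑ j, A i j * e i * e j) - 4 * d * ∑ i, A i i) := by
    have e2 : 4 * d * ∑ i, A i i = ∑ i, ∑ j, A i j * (if i = j then 4 * d else 0) := by
      rw [Finset.mul_sum]
      refine Finset.sum_congr rfl fun i _ => ?_
      simp
      ring
    rw [e2]
    simp only [Finset.mul_sum, ← Finset.sum_sub_distrib]
    refine Finset.sum_congr rfl fun i _ => Finset.sum_congr rfl fun j _ => ?_
    simp only [N]; ring
  obtain ⟨h1, h2⟩ := psd_bound N A ν hν (by
    intro i j
    simp only [N, hsym i j, mul_comm (e i), eq_comm (a := i)]) (fun k => by rw [hNk]; exact hpos k) hA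
  have hν0 : 0 < ν := by linarith
  have htr := trace_bound A ν hν hA2
  have hee := hA e
  rw [← hse] at hee
  -- main scalar inequality
  set P := ∑ i, ∑ j, A i j * N i j with hP
  set B := (n : ℝ) * ν with hB
  have hB0 : 0 ≤ B := by positivity
  have hscal : 4 * B * d - 4 * ν⁻¹ * s ^ 2 ≤ ((B + 1) ^ 2 * ν) / ρ ^ 2 * d ^ 2 := by
    have hs2 : s ^ 2 = ρ ^ 2 - d := by linarith
    have hν1 : ν⁻¹ ≤ 1 := inv_le_one_of_one_le₀ hν
    have : 4 * (B + 1) * d ≤ ((B + 1) ^ 2 * ν) / ρ ^ 2 * d ^ 2 + 4 * ν⁻¹ * ρ ^ 2 := by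
      have hsq : 0 ≤ ν⁻¹ * ((B + 1) * ν * d / ρ - 2 * ρ) ^ 2 := by positivity
      have hexp : ν⁻¹ * ((B + 1) * ν * d / ρ - 2 * ρ) ^ 2 =
        ((B + 1) ^ 2 * ν) / ρ ^ 2 * d ^ 2 + 4 * ν⁻¹ * ρ ^ 2 - 4 * (B + 1) * d := by
        field_simp
        ring
      linarith
    rw [hs2]
    nlinarith
  have hmain : P + c * (d ^ 2 / ρ ^ 2 + 4 * ν⁻¹ * s ^ 2) ≤ c * (4 * b * d * s) := by
    have t1 : c * (8 * (ν⁻¹ * s ^ 2)) ≤ c * (8 * ∑ i, ∑ j, A i j * e i * e j) := by gcongr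
    have t2 : c * (4 * d * ∑ i, A i i) ≤ c * (4 * d * B) := by gcongr
    have t3 : c * (4 * B * d - 4 * ν⁻¹ * s ^ 2) ≤ c * (((B + 1) ^ 2 * ν) / ρ ^ 2 * d ^ 2) := by
      gcongr
    have t4 : ((B + 1) ^ 2 * ν + 1) / ρ ^ 2 * (c * d ^ 2) =
      c * (((B + 1) ^ 2 * ν) / ρ ^ 2 * d ^ 2) + c * (d ^ 2 / ρ ^ 2) := by ring
    rw [t4] at hut
    nlinarith
  have hs0 : 0 < s := by
    rcases hs.lt_or_eq with h | h
    · exact h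
    · exfalso
      rw [← h] at hmain
      have : 0 < c * (d ^ 2 / ρ ^ 2 + 4 * ν⁻¹ * 0 ^ 2) := by
        have : 0 < d ^ 2 / ρ ^ 2 := by positivity
        have h3 : 4 * ν⁻¹ * (0 : ℝ) ^ 2 = 0 := by ring
        rw [h3, add_zero]; positivity
      have h4 : c * (4 * b * d * 0) = 0 := by ring
      linarith
  refine ⟨hs0, ?_, ?_⟩
  · have h3 : d ^ 2 / ρ ^ 2 + 4 * ν⁻¹ * s ^ 2 ≤ 4 * b * d * s := by
      have : c * (d ^ 2 / ρ ^ 2 + 4 * ν⁻¹ * s ^ 2) ≤ c * (4 * b * d * s) := by linarith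
      exact le_of_mul_le_mul_left this hc
    -- 4 d s / (ρ ν) ≤ d²/ρ² + 4 s²/ν²
    have hν1 : ν⁻¹ ≤ 1 := inv_le_one_of_one_le₀ hν
    have hνi : 0 < ν⁻¹ := by positivity
    have h4 : 4 * (d / ρ) * (s * ν⁻¹) ≤ d ^ 2 / ρ ^ 2 + 4 * ν⁻¹ * s ^ 2 := by
      have h5 : (s * ν⁻¹) ^ 2 ≤ ν⁻¹ * s ^ 2 := by
        have : (s * ν⁻¹) ^ 2 = ν⁻¹ * s ^ 2 * ν⁻¹ := by ring
        rw [this]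
        have : 0 ≤ ν⁻¹ * s ^ 2 := by positivity
        nlinarith
      have h6 : d ^ 2 / ρ ^ 2 = (d / ρ) ^ 2 := by rw [div_pow]
      rw [h6]
      nlinarith [sq_nonneg (d / ρ - 2 * (s * ν⁻¹))]
    have h7 : 4 * d * s * (1 / (ρ * ν)) ≤ 4 * d * s * b := by
      have : 4 * (d / ρ) * (s * ν⁻¹) = 4 * d * s * (1 / (ρ * ν)) := by field_simp
      rw [← this]; linarith
    have h8 := le_of_mul_le_mul_left h7 (by positivity)
    rw [div_le_iff₀ (by positivity)] at h8
    linarith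
  · intro k
    rw [← hNk]
    refine (h2 k).trans ?_
    have h3 : P ≤ c * (4 * b * d * s) := by
      have : 0 ≤ c * (d ^ 2 / ρ ^ 2 + 4 * ν⁻¹ * s ^ 2) := by positivity
      linarith
    calc ν * P * ∑ i, k i ^ 2 ≤ ν * (c * (4 * b * d * s)) * ∑ i, k i ^ 2 := by gcongr
      _ = _ := by ring


/-! ### The minimal drift -/

/-- Admissible constant diffusion matrices. -/
def Ell (n : ℕ) (ν : ℝ) : Set (Matrix (Fin n) (Fin n) ℝ) :=
  {A | (∀ ξ : Fin n → ℝ, ν⁻¹ * (∑ i, ξ i ^ 2) ≤ ∑ i, ∑ j, A i j * ξ i * ξ j) ∧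
    (∑ i, ∑ j, (A i j) ^ 2) ≤ ν ^ 2}

lemma isCompact_Ell (ν : ℝ) (hν : 1 ≤ ν) : IsCompact (Ell n ν) := by
  have hc : IsCompact (Set.pi univ fun _ : Fin n => Set.pi univ fun _ : Fin n => Icc (-ν) ν) :=
    isCompact_univ_pi fun _ => isCompact_univ_pi fun _ => isCompact_Icc
  refine IsCompact.of_isClosed_subset hc ?_ ?_
  · have h1 : IsClosed {A : Matrix (Fin n) (Fin n) ℝ |
        ∀ ξ : Fin n → ℝ, ν⁻¹ * (∑ i, ξ i ^ 2) ≤ ∑ i, ∑ j, A i j * ξ i * ξ j} := by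
      simp only [ofPred_forall]
      refine isClosed_iInter fun ξ => isClosed_le (by fun_prop) ?_
      refine continuous_finsetSum _ fun i _ => continuous_finsetSum _ fun j _ => ?_
      exact ((continuous_id.matrix_elem i j).mul continuous_const).mul continuous_const
    have h2 : IsClosed {A : Matrix (Fin n) (Fin n) ℝ | (∑ i, ∑ j, (A i j) ^ 2) ≤ ν ^ 2} := by
      refine isClosed_le ?_ continuous_const
      refine continuous_finsetSum _ fun i _ => continuous_finsetSum _ fun j _ => ?_
      exact (continuous_id.matrix_elem i j).pow 2
    exact h1.inter h2
  · rintro A ⟨_, hA⟩ i _ j _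
    have : A i j ^ 2 ≤ ν ^ 2 := by
      refine le_trans ?_ hA
      calc A i j ^ 2 ≤ ∑ j, A i j ^ 2 :=
            Finset.single_le_sum (f := fun j => A i j ^ 2) (fun j _ => sq_nonneg _)
              (Finset.mem_univ j)
        _ ≤ _ := Finset.single_le_sum (f := fun i => ∑ j, A i j ^ 2)
              (fun i _ => Finset.sum_nonneg fun j _ => sq_nonneg _) (Finset.mem_univ i)
    exact abs_le_of_sq_le_sq' this (by linarith)

/-- The lower Pucci-type extremal operator. -/
def mLow (ν : ℝ) (M : Matrix (Fin n) (Fin n) ℝ) : ℝ :=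
  sInf ((fun A : Matrix (Fin n) (Fin n) ℝ => ∑ i, ∑ j, A i j * M i j) '' Ell n ν)

lemma continuous_pairing : Continuous
    (fun p : Matrix (Fin n) (Fin n) ℝ × Matrix (Fin n) (Fin n) ℝ =>
      ∑ i, ∑ j, p.2 i j * p.1 i j) := by
  refine continuous_finsetSum _ fun i _ => continuous_finsetSum _ fun j _ => ?_
  exact (continuous_snd.matrix_elem i j).mul (continuous_fst.matrix_elem i j)

lemma continuous_mLow (ν : ℝ) (hν : 1 ≤ ν) :
    Continuous (mLow (n := n) ν) :=
  (isCompact_Ell ν hν).continuous_sInf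
    (f := fun (M A : Matrix (Fin n) (Fin n) ℝ) => ∑ i, ∑ j, A i j * M i j) continuous_pairing

lemma mLow_le (ν : ℝ) (hν : 1 ≤ ν) (M A : Matrix (Fin n) (Fin n) ℝ) (hA : A ∈ Ell n ν) :
    mLow ν M ≤ ∑ i, ∑ j, A i j * M i j := by
  refine csInf_le ?_ ⟨A, hA, rfl⟩
  exact ((isCompact_Ell ν hν).image (continuous_pairing.comp (Continuous.prodMk_right M))).bddBelow

lemma mLow_attained (ν : ℝ) (hν : 1 ≤ ν) (M : Matrix (Fin n) (Fin n) ℝ)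
    (hne : (Ell n ν).Nonempty) : ∃ A ∈ Ell n ν, ∑ i, ∑ j, A i j * M i j = mLow ν M := by
  have := ((isCompact_Ell ν hν).image
    (continuous_pairing.comp (Continuous.prodMk_right M))).sInf_mem (hne.image _)
  exact this

/-- Squared norm of the spatial gradient. -/
def gradSq (u : En n × ℝ → ℝ) (X : En n × ℝ) : ℝ := ∑ i, (Dx u i X) ^ 2

/-- The minimal drift size forced by the differential inequality. -/
def needH (u : En n × ℝ → ℝ) (ν : ℝ) (X : En n × ℝ) : ℝ :=
  (mLow ν (fun i j => Dxx u i j X) - Dt u X) / √(gradSq u X)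

/-- Supremum in time of the minimal drift. -/
def hst (u : En n × ℝ → ℝ) (ν : ℝ) (Q : Set (En n × ℝ)) (x : En n) : ℝ≥0∞ :=
  ⨆ t : ℝ, ⨆ (_ : (x, t) ∈ Q ∧ 0 < gradSq u (x, t)), ENNReal.ofReal (needH u ν (x, t))

lemma isOpen_needH {u : En n × ℝ → ℝ} {O Q : Set (En n × ℝ)} (hu : IsC21 u O)
    (hQ : IsOpen Q) (hQO : Q ⊆ O) (ν : ℝ) (hν : 1 ≤ ν) (c : ℝ≥0∞) :
    IsOpen {X | (X ∈ Q ∧ 0 < gradSq u X) ∧ c < ENNReal.ofReal (needH u ν X)} := by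
  have hg : ContinuousOn (gradSq u) Q := by
    refine continuousOn_finsetSum _ fun i _ => ?_
    exact ((hu.cont_x i).mono hQO).pow 2
  have hU : IsOpen {X | X ∈ Q ∧ 0 < gradSq u X} :=
    hg.isOpen_inter_preimage hQ isOpen_Ioi
  have hm : ContinuousOn (fun X => mLow ν (fun i j => Dxx u i j X)) Q := by
    refine (continuous_mLow ν hν).comp_continuousOn ?_
    refine continuousOn_pi.2 fun i => continuousOn_pi.2 fun j => (hu.cont_xx i j).mono hQO
  have hH : ContinuousOn (fun X => ENNReal.ofReal (needH u ν X)) {X | X ∈ Q ∧ 0 < gradSq u X} := by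
    refine ENNReal.continuous_ofReal.comp_continuousOn ?_
    refine ContinuousOn.div ?_ ?_ ?_
    · exact (hm.sub (hu.cont_t.mono hQO)).mono fun X hX => hX.1
    · exact Real.continuous_sqrt.comp_continuousOn (hg.mono fun X hX => hX.1)
    · intro X hX
      exact (Real.sqrt_pos.2 hX.2).ne'
  exact hH.isOpen_inter_preimage hU isOpen_Ioi

lemma measurable_hst {u : En n × ℝ → ℝ} {O Q : Set (En n × ℝ)} (hu : IsC21 u O)
    (hQ : IsOpen Q) (hQO : Q ⊆ O) (ν : ℝ) (hν : 1 ≤ ν) : Measurable (hst u ν Q) := by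
  refine measurable_of_Ioi fun c => ?_
  have : hst u ν Q ⁻¹' Ioi c = Prod.fst ''
      {X | (X ∈ Q ∧ 0 < gradSq u X) ∧ c < ENNReal.ofReal (needH u ν X)} := by
    ext x
    simp only [hst, mem_preimage, mem_Ioi, lt_iSup_iff, mem_image]
    constructor
    · rintro ⟨t, h1, h2⟩
      exact ⟨(x, t), ⟨h1, h2⟩, rfl⟩
    · rintro ⟨⟨x', t⟩, ⟨h1, h2⟩, rfl⟩
      exact ⟨t, h1, h2⟩
  rw [this]
  exact (isOpenMap_fst _ (isOpen_needH hu hQ hQO ν hν c)).measurableSet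

lemma needH_le {u : En n × ℝ → ℝ} {Q : Set (En n × ℝ)}
    {a : En n × ℝ → Matrix (Fin n) (Fin n) ℝ} {b : En n × ℝ → En n} (ν : ℝ) (hν : 1 ≤ ν)
    (ha : UnifParabolic ν a Q) (heq : ∀ X ∈ Q, -Dt u X + Lop a b u X ≤ 0)
    {X : En n × ℝ} (hX : X ∈ Q) (hg : 0 < gradSq u X) : needH u ν X ≤ ‖b X‖ := by
  have hs := Real.sqrt_pos.2 hg
  rw [needH, div_le_iff₀ hs]
  have h1 := heq X hX
  have h2 := mLow_le ν hν (fun i j => Dxx u i j X) (a X) (ha X hX)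
  have h3 : -(∑ i, b X i * Dx u i X) ≤ ‖b X‖ * √(gradSq u X) := by
    rw [EuclideanSpace.norm_eq, gradSq]
    have := Real.sum_mul_le_sqrt_mul_sqrt Finset.univ (fun i => -(b X i)) (fun i => Dx u i X)
    simp only [neg_mul, Finset.sum_neg_distrib, neg_sq] at this
    simpa using this
  rw [Lop] at h1
  linarith

lemma hst_le {u : En n × ℝ → ℝ} {O Q : Set (En n × ℝ)} (hu : IsC21 u O)
    (hQ : IsOpen Q) (hQO : Q ⊆ O)
    {a : En n × ℝ → Matrix (Fin n) (Fin n) ℝ} {b : En n × ℝ → En n} (ν : ℝ) (hν : 1 ≤ ν)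
    (ha : UnifParabolic ν a Q) (heq : ∀ X ∈ Q, -Dt u X + Lop a b u X ≤ 0) (x : En n) :
    hst u ν Q x ≤ essSup (fun t => (‖b (x, t)‖₊ : ℝ≥0∞)) (volume.restrict {t | (x, t) ∈ Q}) := by
  refine iSup_le fun t => iSup_le fun ht => ?_
  by_contra! hlt
  set B := essSup (fun t => (‖b (x, t)‖₊ : ℝ≥0∞)) (volume.restrict {t | (x, t) ∈ Q}) with hB
  let V : Set ℝ := {s | ((x, s) ∈ Q ∧ 0 < gradSq u (x, s)) ∧ B < ENNReal.ofReal (needH u ν (x, s))}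
  have hcs : Continuous fun s : ℝ => (x, s) := by fun_prop
  have hV : IsOpen V := (isOpen_needH hu hQ hQO ν hν B).preimage hcs
  have hsl : IsOpen {s | (x, s) ∈ Q} := hQ.preimage hcs
  have hVpos : 0 < volume V := hV.measure_pos volume ⟨t, ht, hlt⟩
  have hae := ENNReal.ae_le_essSup (μ := volume.restrict {t | (x, t) ∈ Q})
    (fun t => (‖b (x, t)‖₊ : ℝ≥0∞))
  rw [ae_restrict_iff' hsl.measurableSet] at hae
  have : volume V = 0 := by
    refine measure_mono_null ?_ hae
    intro s hs hcon
    have h1 := hcon hs.1.1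
    have h2 := needH_le ν hν ha heq hs.1.1 hs.1.2
    have h3 : ENNReal.ofReal (needH u ν (x, s)) ≤ (‖b (x, s)‖₊ : ℝ≥0∞) := by
      rw [← enorm_eq_nnnorm, ← ofReal_norm]
      exact ENNReal.ofReal_le_ofReal h2
    exact absurd (hs.2.trans_le (h3.trans h1)) (lt_irrefl _)
  exact hVpos.ne' this

open scoped Topology in
lemma hasFDerivAt_bump (ρ : ℝ) (y z : En n) :
    HasFDerivAt (fun z : En n => (ρ ^ 2 - ‖z - y‖ ^ 2) ^ 2)
      ((-4 * (ρ ^ 2 - ‖z - y‖ ^ 2)) • innerSL ℝ (z - y)) z := by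
  have e1 : HasFDerivAt (fun w : En n => w - y) (ContinuousLinearMap.id ℝ (En n)) z :=
    (hasFDerivAt_id z).sub_const y
  have e2 := (e1.norm_sq.const_sub (ρ ^ 2)).pow 2
  refine e2.congr_fderiv ?_
  ext v
  simp
  ring

/-- The Euclidean inner product as a real bilinear map. -/
def inB (n : ℕ) : En n →L[ℝ] En n →L[ℝ] ℝ :=
  ∑ j, (EuclideanSpace.proj j : En n →L[ℝ] ℝ).smulRight (EuclideanSpace.proj j : En n →L[ℝ] ℝ)

lemma inB_apply (v w : En n) : inB n v w = ∑ j, v j * w j := by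
  simp [inB]

lemma innerSL_eq_inB (v : En n) : innerSL ℝ v = inB n v := by
  ext w
  rw [inB_apply, innerSL_apply_apply, PiLp.inner_apply]
  simp [mul_comm]

lemma hasFDerivAt_bumpA (ρ : ℝ) (y z : En n) :
    HasFDerivAt (fun z : En n => (ρ ^ 2 - ‖z - y‖ ^ 2) ^ 2)
      ((-4 * (ρ ^ 2 - ‖z - y‖ ^ 2)) • inB n (z - y)) z := by
  rw [← innerSL_eq_inB]
  exact hasFDerivAt_bump ρ y z

lemma hasFDerivAt_bumpB (ρ : ℝ) (y z : En n) :
    HasFDerivAt (fun z : En n => (-4 * (ρ ^ 2 - ‖z - y‖ ^ 2)) • inB n (z - y))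
      ((-4 * (ρ ^ 2 - ‖z - y‖ ^ 2)) • inB n +
        ((8 : ℝ) • inB n (z - y)).smulRight (inB n (z - y))) z := by
  have e1 : HasFDerivAt (fun w : En n => w - y) (ContinuousLinearMap.id ℝ (En n)) z :=
    (hasFDerivAt_id z).sub_const y
  have e2 := (e1.norm_sq.const_sub (ρ ^ 2)).const_mul (-4)
  have e3 : HasFDerivAt (fun w : En n => inB n (w - y))
      ((inB n).comp (ContinuousLinearMap.id ℝ (En n))) z :=
    (inB n).hasFDerivAt.comp z e1
  refine (e2.smul e3).congr_fderiv ?_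
  rw [innerSL_eq_inB]
  ext v w
  simp
  left
  ring


/-! ### Contact points -/

open scoped Topology in
lemma contact_pt {u : En n × ℝ → ℝ} {O Q : Set (En n × ℝ)} (hO : IsOpen O) (hu : IsC21 u O)
    (hQO : Q ⊆ O) {a : En n × ℝ → Matrix (Fin n) (Fin n) ℝ} {b : En n × ℝ → En n}
    {ν : ℝ} (hν : 1 ≤ ν) (ha : UnifParabolic ν a Q)
    (heq : ∀ X ∈ Q, -Dt u X + Lop a b u X ≤ 0) {x y : En n} {t ρ c : ℝ} (hX : (x, t) ∈ Q)
    (hρ : 0 < ρ) (hc : 0 < c) (hxy : ‖x - y‖ < ρ)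
    (hcon : u (x, t) = c * (ρ ^ 2 - ‖x - y‖ ^ 2) ^ 2)
    (hloc : ∀ᶠ z in 𝓝 x, c * (ρ ^ 2 - ‖z - y‖ ^ 2) ^ 2 ≤ u (z, t))
    (hut : Dt u (x, t) ≤ -((((n : ℝ) * ν + 1) ^ 2 * ν + 1) / ρ ^ 2 *
      (c * (ρ ^ 2 - ‖x - y‖ ^ 2) ^ 2))) :
    ∃ B : ℝ, 1 ≤ ν * ρ * B ∧ ENNReal.ofReal B ≤ hst u ν Q x ∧
      ∀ᶠ z in 𝓝 x, u (z, t) ≤ c * ((ρ ^ 2 - ‖z - y‖ ^ 2) ^ 2 +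
        4 * ν * B * ρ * (ρ ^ 2 - ‖x - y‖ ^ 2) * ‖z - x‖ ^ 2) := by
  set d := ρ ^ 2 - ‖x - y‖ ^ 2 with hd
  have hdpos : 0 < d := by
    have := norm_nonneg (x - y)
    nlinarith
  obtain ⟨s1, f'', s2, s3⟩ := c21_slice hO hu (hQO hX)
  simp only at s1 s2 s3
  set F := fun z : En n => u (z, t) - c * (ρ ^ 2 - ‖z - y‖ ^ 2) ^ 2 with hF
  set F' := fun z : En n => fderiv ℝ (fun x => u (x, t)) z -
    c • ((-4 * (ρ ^ 2 - ‖z - y‖ ^ 2)) • inB n (z - y)) with hF'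
  set F'' := f'' - c • ((-4 * (ρ ^ 2 - ‖x - y‖ ^ 2)) • inB n +
        ((8 : ℝ) • inB n (x - y)).smulRight (inB n (x - y))) with hF''
  have g1 : ∀ᶠ z in 𝓝 x, HasFDerivAt F (F' z) z := by
    filter_upwards [s1] with z hz
    exact hz.sub ((hasFDerivAt_bumpA ρ y z).const_mul c)
  have g2 : HasFDerivAt F' F'' x := s2.sub ((hasFDerivAt_bumpB ρ y x).const_smul c)
  have hFx : F x = 0 := by simp only [hF, hcon]; rw [← hd]; ring
  have hmin : ∀ᶠ z in 𝓝 x, F x ≤ F z := by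
    filter_upwards [hloc] with z hz
    rw [hFx]; simp only [hF]; linarith
  have g3 : F' x = 0 := IsLocalMin.hasFDerivAt_eq_zero (f := F) hmin g1.self_of_nhds
  have hgrad : ∀ v : En n, ∑ i, Dx u i (x, t) * v i = -4 * c * d * ∑ i, (x i - y i) * v i := by
    intro v
    have h1 := DFunLike.congr_fun g3 v
    simp only [hF', _root_.sub_apply, _root_.smul_apply, inB_apply, smul_eq_mul,
      _root_.zero_apply, ← hd] at h1
    have h2 := c21_first (u := u) (x, t) v
    simp only at h2
    rw [h2] at h1
    simp only [PiLp.sub_apply] at h1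
    linarith
  have hDx : ∀ i, Dx u i (x, t) = -4 * c * d * (x i - y i) := by
    intro i
    have := hgrad (EuclideanSpace.single i 1)
    simpa [Pi.single_apply] using this
  have hsq : ‖x - y‖ ^ 2 = ∑ i, (x i - y i) ^ 2 := by
    rw [EuclideanSpace.norm_sq_eq]; simp
  have hgs : gradSq u (x, t) = (4 * c * d * ‖x - y‖) ^ 2 := by
    rw [gradSq, mul_pow, hsq, Finset.mul_sum]
    refine Finset.sum_congr rfl fun i _ => ?_
    rw [hDx]; ring
  have hsq4 : √(gradSq u (x, t)) = 4 * c * d * ‖x - y‖ := by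
    rw [hgs, Real.sqrt_sq (by positivity)]
  have hFk : ∀ k : En n, F'' k k = (∑ i, ∑ j, Dxx u i j (x, t) * k i * k j)
      - c * (8 * (∑ i, (x i - y i) * k i) ^ 2 - 4 * d * ∑ i, k i ^ 2) := by
    intro k
    simp only [hF'', _root_.sub_apply, _root_.smul_apply, _root_.add_apply,
      ContinuousLinearMap.smulRight_apply, s3, inB_apply, smul_eq_mul, ← hd, PiLp.sub_apply]
    have : ∑ i, k i ^ 2 = ∑ i, k i * k i := Finset.sum_congr rfl fun i _ => by ring
    rw [this]
    ring
  have hpos : ∀ k : Fin n → ℝ, 0 ≤ (∑ i, ∑ j, Dxx u i j (x, t) * k i * k j)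
      - c * (8 * (∑ i, (x i - y i) * k i) ^ 2 - 4 * d * ∑ i, k i ^ 2) := by
    intro k
    have := snd_nonneg_of_localMin g1 g2 g3 hmin (WithLp.toLp 2 k)
    rw [hFk] at this
    simpa using this
  have hsym : ∀ i j, Dxx u i j (x, t) = Dxx u j i (x, t) := c21_symm hO hu (hQO hX)
  obtain ⟨aX1, aX2⟩ := ha _ hX
  have heqX := heq _ hX
  have hs0 : 0 < ‖x - y‖ := by
    by_contra! hs0
    have hs0 : ‖x - y‖ = 0 := le_antisymm hs0 (norm_nonneg _)
    have := contact_bound (a (x, t)) (fun i j => Dxx u i j (x, t)) ν ρ c d 0 (Dt u (x, t))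
      ‖x - y‖ (fun i => x i - y i) hν hρ hc hdpos (norm_nonneg _) hsq hd aX1 aX2 hsym hut ?_ hpos
    · exact this.1.ne' hs0
    · have h0 : ∑ i, b (x, t) i * Dx u i (x, t) = 0 := by
        refine Finset.sum_eq_zero fun i _ => ?_
        have : x - y = 0 := norm_eq_zero.1 hs0
        have : x i - y i = 0 := by simpa using congrArg (fun v : En n => v i) this
        rw [hDx, this]; ring
      rw [Lop, h0] at heqX
      linarith
  have hgpos : 0 < gradSq u (x, t) := by rw [hgs]; positivity
  obtain ⟨A, ⟨hA1, hA2⟩, hA3⟩ := mLow_attained ν hν (fun i j => Dxx u i j (x, t)) ⟨_, aX1, aX2⟩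
  have hcb := contact_bound A (fun i j => Dxx u i j (x, t)) ν ρ c d (needH u ν (x, t))
      (Dt u (x, t))
      ‖x - y‖ (fun i => x i - y i) hν hρ hc hdpos (norm_nonneg _) hsq hd hA1 hA2 hsym hut ?_ hpos
  · obtain ⟨-, c2, c3⟩ := hcb
    have hB : 0 < needH u ν (x, t) := by
      have : 0 < ν * ρ := by positivity
      nlinarith
    refine ⟨needH u ν (x, t), c2, le_iSup₂_of_le t ⟨hX, hgpos⟩ le_rfl, ?_⟩
    set B := needH u ν (x, t)
    have hη : 0 < 4 * ν * c * B * d * ‖x - y‖ / 2 := by positivity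
    filter_upwards [taylor2 g1 g2 g3 hη] with z hz
    have h1 := (abs_le.1 hz).2
    rw [hFk, hFx] at h1
    have h2 := c3 (fun i => (z - x) i)
    have h3 : ‖z - x‖ ^ 2 = ∑ i, ((z - x) i) ^ 2 := by
      rw [EuclideanSpace.norm_sq_eq]; simp
    rw [← h3] at h2 h1
    have h4 : 4 * ν * c * B * d * ‖x - y‖ * ‖z - x‖ ^ 2 ≤ 4 * ν * c * B * d * ρ * ‖z - x‖ ^ 2 := by
      gcongr
    simp only [hF] at h1
    simp only at h2
    have h5 : c * ((ρ ^ 2 - ‖z - y‖ ^ 2) ^ 2 + 4 * ν * B * ρ * d * ‖z - x‖ ^ 2) =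
        c * (ρ ^ 2 - ‖z - y‖ ^ 2) ^ 2 + 4 * ν * c * B * d * ρ * ‖z - x‖ ^ 2 := by ring
    rw [h5]
    linarith
  · rw [hA3, ← hsq4, needH, div_mul_cancel₀ _ (Real.sqrt_pos.2 hgpos).ne']
    linarith


/-! ### Pairs of contact points -/

lemma pair_algebra (P0 m E θ : ℝ) (hP0 : 0 < P0) (hP1 : 0 < P0 + m) (hE : 0 ≤ E) (h0 : 0 ≤ θ)
    (h1 : θ ≤ 1) :
    (P0 + m) * (P0 - θ * (m + E) - θ ^ 2 * E + θ * (1 - θ) * E) ≤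
      (P0 - (θ - 1) * (m + E) - (θ - 1) ^ 2 * E) * P0 := by
  have key : 0 ≤ m ^ 2 + 2 * θ * E * m + (1 + θ) * E * P0 := by
    rcases le_total 0 m with hm | hm
    · positivity
    · nlinarith [mul_nonneg (mul_nonneg (by linarith : (0:ℝ) ≤ 1 + θ) hE) hP1.le,
        mul_nonneg (mul_nonneg (by linarith : (0:ℝ) ≤ 1 - θ) hE) (by linarith : (0:ℝ) ≤ -m)]
  nlinarith [mul_nonneg h0 key]

lemma pair_bump (ρ θ : ℝ) (x y₁ y₂ : En n) (hx₁ : ‖x - y₁‖ < ρ) (hx₂ : ‖x - y₂‖ < ρ)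
    (h0 : 0 ≤ θ) (h1 : θ ≤ 1) :
    (ρ ^ 2 - ‖x - y₂‖ ^ 2) * ((ρ ^ 2 - ‖x + θ • (y₂ - y₁) - y₁‖ ^ 2) +
      θ * (1 - θ) * ‖y₂ - y₁‖ ^ 2) ≤
    (ρ ^ 2 - ‖x + θ • (y₂ - y₁) - y₂‖ ^ 2) * (ρ ^ 2 - ‖x - y₁‖ ^ 2) := by
  have n1 := norm_nonneg (x - y₁)
  have n2 := norm_nonneg (x - y₂)
  have p1 : 0 < ρ ^ 2 - ‖x - y₁‖ ^ 2 := by nlinarith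
  have p2 : 0 < ρ ^ 2 - ‖x - y₂‖ ^ 2 := by nlinarith
  have q : ∀ s : ℝ, ‖(x - y₁) + s • (y₂ - y₁)‖ ^ 2 =
      ‖x - y₁‖ ^ 2 + 2 * s * inner ℝ (x - y₁) (y₂ - y₁) + s ^ 2 * ‖y₂ - y₁‖ ^ 2 := by
    intro s
    rw [norm_add_sq_real, inner_smul_right, norm_smul, mul_pow, Real.norm_eq_abs, sq_abs]
    ring
  have e1 : x - y₂ = (x - y₁) + (-1 : ℝ) • (y₂ - y₁) := by module
  have e2 : x + θ • (y₂ - y₁) - y₁ = (x - y₁) + θ • (y₂ - y₁) := by module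
  have e3 : x + θ • (y₂ - y₁) - y₂ = (x - y₁) + (θ - 1) • (y₂ - y₁) := by module
  have q1 := q (-1)
  rw [← e1] at q1
  rw [e2, e3, q, q]
  have := pair_algebra (ρ ^ 2 - ‖x - y₁‖ ^ 2) (2 * inner ℝ (x - y₁) (y₂ - y₁) - ‖y₂ - y₁‖ ^ 2)
    (‖y₂ - y₁‖ ^ 2) θ p1 (by nlinarith) (by positivity) h0 h1
  rw [q1]
  convert this using 1 <;> ring

set_option maxHeartbeats 1000000 in
open scoped Topology in
lemma pair_lemma {f : En n → ℝ} {x₁ y₁ : En n} {ρ c₁ ν B : ℝ} (hν : 1 ≤ ν)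
    (hρ : 0 < ρ) (hc₁ : 0 < c₁) (h₁ : ‖x₁ - y₁‖ < ρ) (hB : 1 ≤ ν * ρ * B)
    (hf : ∀ᶠ z in 𝓝 x₁, f z ≤ c₁ * ((ρ ^ 2 - ‖z - y₁‖ ^ 2) ^ 2 +
        4 * ν * B * ρ * (ρ ^ 2 - ‖x₁ - y₁‖ ^ 2) * ‖z - x₁‖ ^ 2)) :
    ∃ δ : ℝ, 0 < δ ∧ ∀ (x₂ y₂ : En n) (c₂ : ℝ), dist x₁ x₂ < δ → 0 < c₂ → ‖x₂ - y₂‖ < ρ →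
      (‖x₂ - y₁‖ < ρ →
        c₁ * (ρ ^ 2 - ‖x₂ - y₁‖ ^ 2) ^ 2 ≤ c₂ * (ρ ^ 2 - ‖x₂ - y₂‖ ^ 2) ^ 2) →
      (∀ z, ‖z - y₂‖ < ρ → c₂ * (ρ ^ 2 - ‖z - y₂‖ ^ 2) ^ 2 ≤ f z) →
      dist y₁ y₂ ≤ 32 * ν * ρ * B * dist x₁ x₂ := by
  have n1 := norm_nonneg (x₁ - y₁)
  have hd : 0 < ρ ^ 2 - ‖x₁ - y₁‖ ^ 2 := by nlinarith
  have hcont : Continuous fun z : En n => ρ ^ 2 - ‖z - y₁‖ ^ 2 := by fun_prop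
  have hev : ∀ᶠ z in 𝓝 x₁, (ρ ^ 2 - ‖x₁ - y₁‖ ^ 2) / 2 < ρ ^ 2 - ‖z - y₁‖ ^ 2 :=
    hcont.continuousAt.eventually (lt_mem_nhds (by linarith))
  obtain ⟨δ, hδ, hball⟩ := Metric.eventually_nhds_iff_ball.1 (hf.and hev)
  refine ⟨δ / 2, by positivity, fun x₂ y₂ c₂ hx hc₂ h₂ hcc hlow => ?_⟩
  have hBpos : 0 < B := by
    have : 0 < ν * ρ := by positivity
    nlinarith
  have key : ∀ θ : ℝ, 0 ≤ θ → θ ≤ 1 / 2 → ‖x₂ + θ • (y₂ - y₁) - x₁‖ < δ →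
      θ * ‖y₂ - y₁‖ ^ 2 ≤ 8 * ν * B * ρ * ‖x₂ + θ • (y₂ - y₁) - x₁‖ ^ 2 := by
    intro θ h0 hh hz
    obtain ⟨b1, b2⟩ := hball (x₂ + θ • (y₂ - y₁)) (by rwa [mem_ball, dist_eq_norm])
    have hx₂ := (hball x₂ (by rw [mem_ball, dist_comm]; linarith)).2
    have hx₂' : ‖x₂ - y₁‖ < ρ := by
      have := norm_nonneg (x₂ - y₁)
      nlinarith
    have hcc := hcc hx₂'
    have pb := pair_bump ρ θ x₂ y₁ y₂ hx₂' h₂ h0 (by linarith)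
    have hd₂ : 0 < ρ ^ 2 - ‖x₂ - y₂‖ ^ 2 := by
      have := norm_nonneg (x₂ - y₂)
      nlinarith
    set z := x₂ + θ • (y₂ - y₁) with hzdef
    have hd₁ : 0 < ρ ^ 2 - ‖x₂ - y₁‖ ^ 2 := by linarith
    have hg : 0 ≤ θ * (1 - θ) * ‖y₂ - y₁‖ ^ 2 :=
      mul_nonneg (mul_nonneg h0 (by linarith)) (by positivity)
    set g := θ * (1 - θ) * ‖y₂ - y₁‖ ^ 2 with hgdef
    have hd1z : 0 < ρ ^ 2 - ‖z - y₁‖ ^ 2 := by linarith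
    have hd2z : 0 < ρ ^ 2 - ‖z - y₂‖ ^ 2 := by
      have h1 : 0 < (ρ ^ 2 - ‖x₂ - y₂‖ ^ 2) * (ρ ^ 2 - ‖z - y₁‖ ^ 2 + g) := by positivity
      exact pos_of_mul_pos_left (h1.trans_le pb) hd₁.le
    have hz2 : ‖z - y₂‖ < ρ := by
      have := norm_nonneg (z - y₂)
      nlinarith
    have l1 := hlow z hz2
    generalize ρ ^ 2 - ‖z - y₂‖ ^ 2 = Z₂ at *
    generalize ρ ^ 2 - ‖z - y₁‖ ^ 2 = Z₁ at *
    generalize ρ ^ 2 - ‖x₂ - y₁‖ ^ 2 = X₁ at *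
    generalize ρ ^ 2 - ‖x₂ - y₂‖ ^ 2 = X₂ at *
    generalize ρ ^ 2 - ‖x₁ - y₁‖ ^ 2 = D at *
    have s1 : (X₂ * (Z₁ + g)) ^ 2 ≤ (Z₂ * X₁) ^ 2 := pow_le_pow_left₀ (by positivity) pb 2
    have s2 : c₁ * X₁ ^ 2 * (Z₁ + g) ^ 2 ≤ c₂ * Z₂ ^ 2 * X₁ ^ 2 := by
      calc c₁ * X₁ ^ 2 * (Z₁ + g) ^ 2 ≤ c₂ * X₂ ^ 2 * (Z₁ + g) ^ 2 := by gcongr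
        _ = c₂ * (X₂ * (Z₁ + g)) ^ 2 := by ring
        _ ≤ c₂ * (Z₂ * X₁) ^ 2 := by gcongr
        _ = _ := by ring
    have s3 : c₁ * (Z₁ + g) ^ 2 ≤ c₂ * Z₂ ^ 2 := by
      have : 0 < X₁ ^ 2 := by positivity
      exact le_of_mul_le_mul_right (by linarith) this
    have s4 : (Z₁ + g) ^ 2 ≤ Z₁ ^ 2 + 4 * ν * B * ρ * D * ‖z - x₁‖ ^ 2 :=
      le_of_mul_le_mul_left (s3.trans (l1.trans b1)) hc₁
    have s5 : D * g ≤ D * (4 * ν * B * ρ * ‖z - x₁‖ ^ 2) := by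
      have i1 : D * g ≤ 2 * Z₁ * g := mul_le_mul_of_nonneg_right (by linarith) hg
      have i2 := sq_nonneg g
      have i3 : (Z₁ + g) ^ 2 = Z₁ ^ 2 + 2 * Z₁ * g + g ^ 2 := by ring
      have i4 : D * (4 * ν * B * ρ * ‖z - x₁‖ ^ 2) = 4 * ν * B * ρ * D * ‖z - x₁‖ ^ 2 := by ring
      linarith
    have s6 := le_of_mul_le_mul_left s5 hd
    have s7 : θ * ‖y₂ - y₁‖ ^ 2 ≤ 2 * g := by
      have i1 : 0 ≤ θ * ‖y₂ - y₁‖ ^ 2 * (1 - 2 * θ) :=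
        mul_nonneg (by positivity) (by linarith)
      have i2 : 2 * g = θ * ‖y₂ - y₁‖ ^ 2 * (1 - 2 * θ) + θ * ‖y₂ - y₁‖ ^ 2 := by
        rw [hgdef]; ring
      linarith
    linarith
  rw [dist_comm y₁, dist_comm x₁, dist_eq_norm, dist_eq_norm]
  rw [dist_comm, dist_eq_norm] at hx
  set h := ‖x₂ - x₁‖ with hh
  set e := ‖y₂ - y₁‖ with he
  have hh0 : 0 ≤ h := norm_nonneg _
  have he0 : 0 ≤ e := norm_nonneg _
  have hzb : ∀ θ : ℝ, 0 ≤ θ → ‖x₂ + θ • (y₂ - y₁) - x₁‖ ≤ h + θ * e := by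
    intro θ h0
    have : x₂ + θ • (y₂ - y₁) - x₁ = (x₂ - x₁) + θ • (y₂ - y₁) := by module
    rw [this]
    refine (norm_add_le _ _).trans ?_
    rw [norm_smul, Real.norm_eq_abs, abs_of_nonneg h0]
  rcases lt_or_ge (e / 2) h with hc | hc
  · have : 2 * h ≤ 32 * ν * ρ * B * h := by
      have := mul_le_mul_of_nonneg_right hB hh0
      nlinarith
    linarith
  rcases hh0.eq_or_lt with hz | hz
  · by_contra! hcon
    rw [← hz, mul_zero] at hcon
    set W := ν * ρ * B with hW
    set θ := min (min (1 / 2) (1 / (16 * W))) (δ / (2 * e)) with hθ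
    have hWpos : 0 < W := by linarith
    have t0 : 0 < θ := by
      rw [hθ]; refine lt_min (lt_min (by norm_num) (by positivity)) (by positivity)
    have t1 : θ ≤ 1 / 2 := (min_le_left _ _).trans (min_le_left _ _)
    have t2 : θ ≤ 1 / (16 * W) := (min_le_left _ _).trans (min_le_right _ _)
    have t3 : θ ≤ δ / (2 * e) := min_le_right _ _
    have t2' : θ * (16 * W) ≤ 1 := by rwa [le_div_iff₀ (by positivity)] at t2
    have t3' : θ * (2 * e) ≤ δ := by rwa [le_div_iff₀ (by positivity)] at t3
    have z1 := hzb θ t0.le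
    rw [← hz, zero_add] at z1
    have k := key θ t0.le t1 (by linarith)
    have k2 : ‖x₂ + θ • (y₂ - y₁) - x₁‖ ^ 2 ≤ (θ * e) ^ 2 := pow_le_pow_left₀ (norm_nonneg _) z1 2
    have k3 : 8 * ν * B * ρ * ‖x₂ + θ • (y₂ - y₁) - x₁‖ ^ 2 ≤ 8 * ν * B * ρ * (θ * e) ^ 2 := by
      gcongr
    have k4 : θ * e ^ 2 ≤ θ * e ^ 2 * (1 / 2) := by
      calc θ * e ^ 2 ≤ 8 * ν * B * ρ * (θ * e) ^ 2 := k.trans k3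
        _ = θ * e ^ 2 * (θ * (16 * W) / 2) := by rw [hW]; ring
        _ ≤ θ * e ^ 2 * (1 / 2) := by gcongr
    have : 0 < θ * e ^ 2 := by positivity
    linarith
  · have hepos : 0 < e := by linarith
    have hhe : h / e * e = h := div_mul_cancel₀ _ hepos.ne'
    have z1 := hzb (h / e) (by positivity)
    rw [hhe] at z1
    have k := key (h / e) (by positivity) (by rw [div_le_iff₀ hepos]; linarith) (by linarith)
    have k2 : ‖x₂ + (h / e) • (y₂ - y₁) - x₁‖ ^ 2 ≤ (2 * h) ^ 2 :=
      pow_le_pow_left₀ (norm_nonneg _) (by linarith) 2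
    have k3 : 8 * ν * B * ρ * ‖x₂ + (h / e) • (y₂ - y₁) - x₁‖ ^ 2 ≤
        8 * ν * B * ρ * (2 * h) ^ 2 := by gcongr
    have k4 : h / e * e ^ 2 = h * e := by field_simp
    rw [k4] at k
    have k5 : h * e ≤ h * (32 * ν * ρ * B * h) := by
      refine (k.trans k3).trans_eq ?_
      ring
    exact le_of_mul_le_mul_left k5 hz


/-! ### Local lower bound -/

set_option maxHeartbeats 1000000 in
lemma exists_contact {v : En n × ℝ → ℝ} {z y : En n} {ρ ℓ t₀ ts : ℝ} (hρ : 0 < ρ) (hℓ : 0 < ℓ)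
    (ht : t₀ ≤ ts) (hy : ‖y - z‖ < ρ / 2)
    (hcont : ContinuousOn v (closedBall z (2 * ρ) ×ˢ Icc t₀ ts))
    (hpos : ∀ X ∈ closedBall z (2 * ρ) ×ˢ Icc t₀ ts, 0 < v X)
    (hini : ∀ x ∈ closedBall z (2 * ρ), ℓ ≤ v (x, t₀)) (hlow : v (z, ts) < 9 / 16 * ℓ) :
    ∃ (x : En n) (τ c : ℝ), 0 < c ∧ ‖x - y‖ < ρ ∧ τ ∈ Ioc t₀ ts ∧
      v (x, τ) = c * (ρ ^ 2 - ‖x - y‖ ^ 2) ^ 2 ∧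
      ∀ x' t', ‖x' - y‖ < ρ → t' ∈ Icc t₀ ts → c * (ρ ^ 2 - ‖x' - y‖ ^ 2) ^ 2 ≤ v (x', t') := by
  set Kc := closedBall z (2 * ρ) ×ˢ Icc t₀ ts with hKc
  have hcomp : IsCompact Kc := (isCompact_closedBall z _).prod isCompact_Icc
  set ψ : En n × ℝ → ℝ := fun X => (max 0 (ρ ^ 2 - ‖X.1 - y‖ ^ 2)) ^ 2 with hψ
  have hψc : Continuous ψ := by rw [hψ]; fun_prop
  have hmem : ∀ x', ‖x' - y‖ < ρ → x' ∈ closedBall z (2 * ρ) := by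
    intro x' hx'
    rw [mem_closedBall, dist_eq_norm]
    have : x' - z = (x' - y) + (y - z) := by abel
    rw [this]
    exact (norm_add_le _ _).trans (by linarith)
  have hψeq : ∀ X : En n × ℝ, ‖X.1 - y‖ < ρ → ψ X = (ρ ^ 2 - ‖X.1 - y‖ ^ 2) ^ 2 := by
    intro X hX
    have := norm_nonneg (X.1 - y)
    simp only [hψ]
    rw [max_eq_right (by nlinarith)]
  have hzts : (z, ts) ∈ Kc := ⟨mem_closedBall_self (by positivity), ht, le_rfl⟩
  obtain ⟨⟨x, τ⟩, hX, hmax⟩ := hcomp.exists_isMaxOn ⟨_, hzts⟩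
    (hψc.continuousOn.div hcont fun X hX => (hpos X hX).ne')
  have hvX := hpos _ hX
  have hzy : ‖z - y‖ < ρ / 2 := by rwa [norm_sub_rev]
  have hM : ρ ^ 4 / ℓ < ψ (x, τ) / v (x, τ) := by
    refine lt_of_lt_of_le ?_ (hmax hzts)
    change _ < ψ (z, ts) / v (z, ts)
    rw [div_lt_div_iff₀ hℓ (hpos _ hzts), hψeq (z, ts) (by simp only; linarith)]
    have h0 := norm_nonneg (z - y)
    have h1 : 3 / 4 * ρ ^ 2 ≤ ρ ^ 2 - ‖z - y‖ ^ 2 := by nlinarith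
    have h2 : (3 / 4 * ρ ^ 2) ^ 2 ≤ (ρ ^ 2 - ‖z - y‖ ^ 2) ^ 2 :=
      pow_le_pow_left₀ (by positivity) h1 2
    calc ρ ^ 4 * v (z, ts) < ρ ^ 4 * (9 / 16 * ℓ) := by gcongr
      _ = (3 / 4 * ρ ^ 2) ^ 2 * ℓ := by ring
      _ ≤ _ := by gcongr
  have hMpos : 0 < ψ (x, τ) / v (x, τ) := lt_trans (by positivity) hM
  have hψpos : 0 < ψ (x, τ) := by
    by_contra! h
    exact absurd hMpos (not_lt.2 (div_nonpos_of_nonpos_of_nonneg h hvX.le))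
  have hxy : ‖x - y‖ < ρ := by
    by_contra! h
    have : ψ (x, τ) = 0 := by
      simp only [hψ]
      rw [max_eq_left (by nlinarith)]; norm_num
    linarith
  refine ⟨x, τ, v (x, τ) / ψ (x, τ), by positivity, hxy, ⟨?_, hX.2.2⟩, ?_, ?_⟩
  · refine lt_of_le_of_ne hX.2.1 fun heq => ?_
    have h1 : ℓ ≤ v (x, τ) := by
      have := hini x hX.1
      rwa [heq] at this
    have h2 : ψ (x, τ) ≤ ρ ^ 4 := by
      rw [hψeq (x, τ) hxy]
      have h0 := norm_nonneg (x - y)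
      calc (ρ ^ 2 - ‖x - y‖ ^ 2) ^ 2 ≤ (ρ ^ 2) ^ 2 :=
            pow_le_pow_left₀ (by nlinarith) (by nlinarith) 2
        _ = ρ ^ 4 := by ring
    have h3 : ψ (x, τ) / v (x, τ) ≤ ρ ^ 4 / ℓ := by gcongr
    linarith
  · rw [← hψeq (x, τ) hxy, div_mul_cancel₀ _ hψpos.ne']
  · intro x' t' hx' ht'
    have hK' : (x', t') ∈ Kc := ⟨hmem x' hx', ht'⟩
    have h1 : ψ (x', t') / v (x', t') ≤ ψ (x, τ) / v (x, τ) := hmax hK'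
    rw [div_le_div_iff₀ (hpos _ hK') hvX] at h1
    rw [← hψeq (x', t') hx', div_mul_eq_mul_div, div_le_iff₀ hψpos]
    linarith

set_option maxHeartbeats 2000000 in
open scoped Topology NNReal in
lemma local_bound (hn : 0 < n) {u : En n × ℝ → ℝ} {O : Set (En n × ℝ)} {r t₀ t₁ : ℝ}
    (hO : IsOpen O) (hu : IsC21 u O)
    (hQO : ball (0 : En n) r ×ˢ Icc t₀ t₁ ⊆ O)
    {a : En n × ℝ → Matrix (Fin n) (Fin n) ℝ} {b : En n × ℝ → En n}
    {ν : ℝ} (hν : 1 ≤ ν) (ha : UnifParabolic ν a (box 0 r t₀ t₁))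
    (heq : ∀ X ∈ box 0 r t₀ t₁, -Dt u X + Lop a b u X ≤ 0)
    (hpos : ∀ X ∈ box 0 r t₀ t₁, 0 < u X) {ℓ : ℝ} (hℓ : 0 < ℓ)
    (hini : ∀ x ∈ ball (0 : En n) r, ℓ ≤ u (x, t₀)) {z : En n} {ρ : ℝ} (hρ : 0 < ρ)
    (hz : closedBall z (2 * ρ) ⊆ ball 0 r)
    (hsmall : 2 ^ n * ∫⁻ x in ball z (2 * ρ),
      (ENNReal.ofReal (32 * ν * ρ) * hst u ν (box 0 r t₀ t₁) x) ^ n < volume (ball z (ρ / 2)))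
    {ts : ℝ} (hts : ts ∈ Ioo t₀ t₁) :
    9 / 16 * ℓ ≤ u (z, ts) *
      Real.exp ((((n : ℝ) * ν + 1) ^ 2 * ν + 1) / ρ ^ 2 * (ts - t₀)) := by
  by_contra! hcon
  set K := (((n : ℝ) * ν + 1) ^ 2 * ν + 1) / ρ ^ 2 with hK
  set Q := box (0 : En n) r t₀ t₁ with hQdef
  have hQ : IsOpen Q := isOpen_ball.prod isOpen_Ioo
  have hQO' : Q ⊆ O := (prod_mono_right Ioo_subset_Icc_self).trans hQO
  set v : En n × ℝ → ℝ := fun X => u X * Real.exp (K * (X.2 - t₀)) with hv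
  have hKO : closedBall z (2 * ρ) ×ˢ Icc t₀ ts ⊆ O :=
    (prod_mono hz (Icc_subset_Icc_right hts.2.le)).trans hQO
  have hvc : ContinuousOn v (closedBall z (2 * ρ) ×ˢ Icc t₀ ts) := by
    refine (hu.cont.mono hKO).mul ?_
    exact Continuous.continuousOn (by fun_prop)
  have hv0 : ∀ x, v (x, t₀) = u (x, t₀) := by intro x; simp [hv]
  have hupos : ∀ x ∈ closedBall z (2 * ρ), ∀ t ∈ Icc t₀ ts, 0 < u (x, t) := by
    intro x hx t ht
    rcases ht.1.eq_or_lt with h | h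
    · rw [← h]; exact hℓ.trans_le (hini x (hz hx))
    · exact hpos _ ⟨hz hx, h, ht.2.trans_lt hts.2⟩
  have hvp : ∀ X ∈ closedBall z (2 * ρ) ×ˢ Icc t₀ ts, 0 < v X := by
    rintro ⟨x, t⟩ ⟨hx, ht⟩
    exact mul_pos (hupos x hx t ht) (Real.exp_pos _)
  have hex : ∀ y ∈ ball z (ρ / 2), ∃ (x : En n) (τ c : ℝ), 0 < c ∧ ‖x - y‖ < ρ ∧ τ ∈ Ioc t₀ ts ∧
      v (x, τ) = c * (ρ ^ 2 - ‖x - y‖ ^ 2) ^ 2 ∧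
      ∀ x' t', ‖x' - y‖ < ρ → t' ∈ Icc t₀ ts →
        c * (ρ ^ 2 - ‖x' - y‖ ^ 2) ^ 2 ≤ v (x', t') := by
    intro y hy
    refine exists_contact hρ hℓ hts.1.le (by rwa [mem_ball, dist_eq_norm] at hy) hvc hvp ?_ hcon
    intro x hx
    rw [hv0]; exact hini x (hz hx)
  choose! X τ c hc hXy hτ hXc hlow using hex
  have hXD : ∀ y ∈ ball z (ρ / 2), X y ∈ ball z (2 * ρ) := by
    intro y hy
    have h1 := hXy y hy
    rw [mem_ball, dist_eq_norm] at hy ⊢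
    have : X y - z = (X y - y) + (y - z) := by abel
    rw [this]
    exact (norm_add_le _ _).trans_lt (by linarith)
  refine absurd hsmall (not_lt.2 ?_)
  refine vol_le_lintegral hn (ball z (ρ / 2)) (ball z (2 * ρ)) measurableSet_ball X hXD _
    ((measurable_hst hu hQ hQO' ν hν).const_mul _) ?_ ?_
  · intro htop
    rw [htop] at hsmall
    have : (2 : ℝ≥0∞) ^ n * ∞ = ∞ := ENNReal.mul_top (by positivity)
    rw [this] at hsmall
    exact not_top_lt hsmall
  intro y hy
  have hτy := hτ y hy
  have hcy := hc y hy
  have hXQ : (X y, τ y) ∈ Q :=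
    ⟨hz (ball_subset_closedBall (hXD y hy)), hτy.1, hτy.2.trans_lt hts.2⟩
  set E := Real.exp (K * (τ y - t₀)) with hE
  have hEpos : 0 < E := Real.exp_pos _
  have huc : u (X y, τ y) = c y / E * (ρ ^ 2 - ‖X y - y‖ ^ 2) ^ 2 := by
    have := hXc y hy
    simp only [hv] at this
    rw [div_mul_eq_mul_div, eq_div_iff hEpos.ne']
    exact this
  have hut : Dt u (X y, τ y) ≤ -(K * (c y / E * (ρ ^ 2 - ‖X y - y‖ ^ 2) ^ 2)) := by
    rw [← huc]
    have d1 : HasDerivAt (fun t => u (X y, t)) (Dt u (X y, τ y)) (τ y) :=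
      (hu.diff_t _ (hQO' hXQ)).hasDerivAt
    have d2 : HasDerivAt (fun t => Real.exp (K * (t - t₀))) (E * K) (τ y) := by
      have : HasDerivAt (fun t => K * (t - t₀)) K (τ y) := by
        simpa using ((hasDerivAt_id (τ y)).sub_const t₀).const_mul K
      exact this.exp
    have d3 := deriv_nonpos_of_left (d1.mul d2) hτy.1 (by
      intro s hs1 hs2
      have h1 := hlow y hy (X y) s (hXy y hy) ⟨hs1, hs2.trans hτy.2⟩
      rw [← hXc y hy] at h1
      exact h1)
    have d4 : (Dt u (X y, τ y) + K * u (X y, τ y)) * E ≤ 0 := by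
      rw [← hE] at d3
      linarith
    have := nonpos_of_mul_nonpos_left d4 hEpos
    linarith
  obtain ⟨B, hB1, hB2, hB3⟩ := contact_pt hO hu hQO' hν ha heq hXQ hρ (div_pos hcy hEpos)
    (hXy y hy) huc (by
      have : ∀ᶠ w in 𝓝 (X y), ‖w - y‖ < ρ := by
        have hc : Continuous fun w : En n => ‖w - y‖ := by fun_prop
        exact hc.continuousAt.eventually (gt_mem_nhds (hXy y hy))
      filter_upwards [this] with w hw
      have := hlow y hy w (τ y) hw ⟨hτy.1.le, hτy.2⟩
      rw [div_mul_eq_mul_div, div_le_iff₀ hEpos]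
      exact this) hut
  obtain ⟨δ, hδ, hpair⟩ := pair_lemma (f := fun w => v (w, τ y)) hν hρ hcy (hXy y hy) hB1 (by
    filter_upwards [hB3] with w hw
    rw [div_mul_eq_mul_div, le_div_iff₀ hEpos] at hw
    exact hw)
  have hK1 : 1 ≤ 32 * ν * ρ * B := by linarith
  refine ⟨(32 * ν * ρ * B).toNNReal, ?_, ?_, δ, hδ, ?_⟩
  · rw [← NNReal.coe_le_coe, Real.coe_toNNReal _ (by linarith)]
    exact_mod_cast hK1
  · change ENNReal.ofReal (32 * ν * ρ * B) ≤ _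
    rw [ENNReal.ofReal_mul (by positivity)]
    gcongr
  · intro y' hy' hdist
    rw [Real.coe_toNNReal _ (by linarith)]
    refine hpair (X y') y' (c y') hdist (hc y' hy') (hXy y' hy') ?_ ?_
    · intro h
      rw [← hXc y' hy']
      exact hlow y hy _ _ h ⟨(hτ y' hy').1.le, (hτ y' hy').2⟩
    · intro w hw
      exact hlow y' hy' w (τ y) hw ⟨hτy.1.le, hτy.2⟩


/-! ### Minimum principle and assembly -/

open scoped Topology in
lemma min_principle {u : En n × ℝ → ℝ} {O : Set (En n × ℝ)} {r t₀ t₁ : ℝ}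
    (hO : IsOpen O) (hu : IsC21 u O)
    (hQO : ball (0 : En n) r ×ˢ Icc t₀ t₁ ⊆ O)
    {a : En n × ℝ → Matrix (Fin n) (Fin n) ℝ} {b : En n × ℝ → En n}
    {ν : ℝ} (hν : 1 ≤ ν) (ha : UnifParabolic ν a (box 0 r t₀ t₁))
    (heq : ∀ X ∈ box 0 r t₀ t₁, -Dt u X + Lop a b u X ≤ 0)
    {R m₀ : ℝ} (hR : R < r)
    (hini : ∀ x ∈ closedBall (0 : En n) R, m₀ ≤ u (x, t₀))
    (hlat : ∀ x : En n, ‖x‖ = R → ∀ t ∈ Ioo t₀ t₁, m₀ ≤ u (x, t))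
    {x : En n} (hx : x ∈ closedBall (0 : En n) R) {ts : ℝ} (hts : ts ∈ Ioo t₀ t₁) :
    m₀ ≤ u (x, ts) := by
  by_contra! hcon
  have hT : 0 < ts - t₀ := sub_pos.2 hts.1
  set ε := (m₀ - u (x, ts)) / (2 * (ts - t₀)) with hε
  have hεpos : 0 < ε := by
    rw [hε]; exact div_pos (by linarith) (by linarith)
  have hεt : ε * (ts - t₀) = (m₀ - u (x, ts)) / 2 := by
    rw [hε]; field_simp
  set w : En n × ℝ → ℝ := fun X => u X + ε * (X.2 - t₀) with hw
  have hsub : closedBall (0 : En n) R ×ˢ Icc t₀ ts ⊆ O :=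
    (prod_mono (closedBall_subset_ball hR) (Icc_subset_Icc_right hts.2.le)).trans hQO
  have hwc : ContinuousOn w (closedBall (0 : En n) R ×ˢ Icc t₀ ts) := by
    refine (hu.cont.mono hsub).add ?_
    exact Continuous.continuousOn (by fun_prop)
  have hmem : (x, ts) ∈ closedBall (0 : En n) R ×ˢ Icc t₀ ts := ⟨hx, hts.1.le, le_rfl⟩
  obtain ⟨⟨y, τ⟩, hY, hmin⟩ := ((isCompact_closedBall (0 : En n) R).prod
    (isCompact_Icc (a := t₀) (b := ts))).exists_isMinOn ⟨_, hmem⟩ hwc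
  have hval : u (y, τ) + ε * (τ - t₀) < m₀ := by
    have : w (y, τ) ≤ w (x, ts) := hmin hmem
    simp only [hw] at this
    linarith
  obtain ⟨hyR, hτ1, hτ2⟩ := hY
  simp only at hyR hτ1 hτ2
  have hτ0 : t₀ < τ := by
    refine lt_of_le_of_ne hτ1 fun h => ?_
    have := hini y hyR
    rw [← h] at hval
    linarith
  have hτm : τ ∈ Ioo t₀ t₁ := ⟨hτ0, hτ2.trans_lt hts.2⟩
  have hετ : 0 < ε * (τ - t₀) := mul_pos hεpos (by linarith)
  have hyR' : ‖y‖ < R := by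
    rw [mem_closedBall, dist_zero_right] at hyR
    refine lt_of_le_of_ne hyR fun h => ?_
    have := hlat y h τ hτm
    linarith
  have hYQ : (y, τ) ∈ box (0 : En n) r t₀ t₁ := by
    refine ⟨?_, hτm⟩
    rw [mem_ball, dist_zero_right]; linarith
  have hYO : (y, τ) ∈ O := hsub ⟨hyR, hτ1, hτ2⟩
  obtain ⟨s1, f'', s2, s3⟩ := c21_slice hO hu hYO
  simp only at s1 s2 s3
  have hloc : ∀ᶠ z in 𝓝 y, u (y, τ) ≤ u (z, τ) := by
    have : ∀ᶠ z in 𝓝 y, ‖z‖ < R :=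
      continuous_norm.continuousAt.eventually (gt_mem_nhds hyR')
    filter_upwards [this] with z hz
    have h1 : w (y, τ) ≤ w (z, τ) :=
      hmin ⟨by rw [mem_closedBall, dist_zero_right]; exact hz.le, hτ1, hτ2⟩
    simp only [hw] at h1
    linarith
  have g0 : fderiv ℝ (fun x => u (x, τ)) y = 0 :=
    IsLocalMin.fderiv_eq_zero (f := fun x => u (x, τ)) hloc
  have hDx : ∀ i, Dx u i (y, τ) = 0 := by
    intro i
    simp only [Dx, g0, _root_.zero_apply]
  have hpos : ∀ k : Fin n → ℝ, 0 ≤ ∑ i, ∑ j, Dxx u i j (y, τ) * k i * k j := by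
    intro k
    have := snd_nonneg_of_localMin s1 s2 g0 hloc (WithLp.toLp 2 k)
    rw [s3] at this
    simpa using this
  have hsum := (psd_bound (fun i j => Dxx u i j (y, τ)) (a (y, τ)) ν hν (c21_symm hO hu hYO) hpos
    (ha _ hYQ).1).1
  have hDt : Dt u (y, τ) + ε ≤ 0 := by
    have d1 : HasDerivAt (fun t => u (y, t)) (Dt u (y, τ)) τ := (hu.diff_t _ hYO).hasDerivAt
    have d2 : HasDerivAt (fun t => ε * (t - t₀)) ε τ := by
      simpa using ((hasDerivAt_id τ).sub_const t₀).const_mul ε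
    refine deriv_nonpos_of_left (d1.add d2) hτ0 fun s hs1 hs2 => ?_
    exact hmin (show (y, s) ∈ _ from ⟨hyR, hs1, hs2.trans hτ2⟩)
  have hE := heq _ hYQ
  have hb : ∑ i, b (y, τ) i * Dx u i (y, τ) = 0 :=
    Finset.sum_eq_zero fun i _ => by rw [hDx, mul_zero]
  rw [Lop, hb] at hE
  linarith

/-- Pigeonhole over thin shells. -/
lemma exists_shell (f : En n → ℝ≥0∞) (r : ℝ) (hr : 0 < r) (m : ℕ) (ε S : ℝ≥0∞)
    (hS : ∫⁻ x, f x ≤ S) (hm : S < m * ε) :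
    ∃ j < m, ∫⁻ x in {x : En n | r / 2 + j * (r / (2 * m)) < ‖x‖ ∧
      ‖x‖ < r / 2 + (j + 1) * (r / (2 * m))}, f x < ε := by
  by_contra! hcon
  have hm0 : 0 < m := by
    rcases Nat.eq_zero_or_pos m with h | h
    · subst h; simp at hm
    · exact h
  set A : ℕ → Set (En n) := fun j => {x : En n | r / 2 + j * (r / (2 * m)) < ‖x‖ ∧
      ‖x‖ < r / 2 + (j + 1) * (r / (2 * m))} with hA
  have hmeas : ∀ j, MeasurableSet (A j) := by
    intro j
    refine IsOpen.measurableSet ?_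
    exact (isOpen_lt continuous_const continuous_norm).inter
      (isOpen_lt continuous_norm continuous_const)
  have hq : 0 < r / (2 * (m : ℝ)) := by positivity
  have hlt : ∀ i j : ℕ, i < j → Disjoint (A i) (A j) := by
    intro i j hij
    rw [Set.disjoint_left]
    rintro x ⟨_, h1⟩ ⟨h2, _⟩
    have : ((i : ℝ) + 1) ≤ j := by exact_mod_cast hij
    nlinarith
  have hdisj : Pairwise (Function.onFun Disjoint A) := by
    intro i j hij
    rcases lt_or_gt_of_ne hij with h | h
    · exact hlt i j h
    · exact (hlt j i h).symm
  have h1 : ∫⁻ x in ⋃ j ∈ Finset.range m, A j, f x = ∑ j ∈ Finset.range m, ∫⁻ x in A j, f x :=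
    lintegral_biUnion_finset (fun i _ j _ hij => hdisj hij) (fun j _ => hmeas j) f
  have h2 : (m : ℝ≥0∞) * ε ≤ ∑ j ∈ Finset.range m, ∫⁻ x in A j, f x := by
    have := Finset.sum_le_sum (s := Finset.range m) (f := fun _ => ε)
      (g := fun j => ∫⁻ x in A j, f x) fun j hj => hcon j (Finset.mem_range.1 hj)
    simpa using this
  rw [← h1] at h2
  exact absurd hm (not_lt.2 (h2.trans ((setLIntegral_le_lintegral _ _).trans hS)))

lemma small_of_lt {f : En n → ℝ≥0∞} (z : En n) {ν ρ : ℝ} (hν : 1 ≤ ν) (hρ : 0 < ρ)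
    (D : Set (En n)) (hf : Measurable f)
    (h : ∫⁻ x in D, f x ^ n < volume (ball (0 : En n) 1) / ENNReal.ofReal (128 * ν) ^ n) :
    2 ^ n * ∫⁻ x in D, (ENNReal.ofReal (32 * ν * ρ) * f x) ^ n < volume (ball z (ρ / 2)) := by
  have e1 : ∫⁻ x in D, (ENNReal.ofReal (32 * ν * ρ) * f x) ^ n =
      ENNReal.ofReal (32 * ν * ρ) ^ n * ∫⁻ x in D, f x ^ n := by
    simp only [mul_pow]
    exact lintegral_const_mul _ (hf.pow_const n)
  rw [Measure.addHaar_ball_of_pos _ _ (by positivity : 0 < ρ / 2), e1]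
  simp only [finrank_euclideanSpace, Fintype.card_fin]
  rw [← mul_assoc, ENNReal.ofReal_pow (by positivity)]
  have e2 : (2 : ℝ≥0∞) ^ n * ENNReal.ofReal (32 * ν * ρ) ^ n =
      ENNReal.ofReal (ρ / 2) ^ n * ENNReal.ofReal (128 * ν) ^ n := by
    rw [← mul_pow, ← mul_pow, ← ENNReal.ofReal_mul (by positivity)]
    have : (2 : ℝ≥0∞) = ENNReal.ofReal 2 := by simp
    rw [this, ← ENNReal.ofReal_mul (by norm_num)]
    congr 2
    ring
  rw [e2, mul_assoc]
  have p1 : ENNReal.ofReal (ρ / 2) ^ n ≠ 0 :=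
    pow_ne_zero _ (by rw [Ne, ENNReal.ofReal_eq_zero, not_le]; positivity)
  have p2 : ENNReal.ofReal (ρ / 2) ^ n ≠ ∞ := ENNReal.pow_ne_top ENNReal.ofReal_ne_top
  have p3 : ENNReal.ofReal (128 * ν) ^ n ≠ 0 :=
    pow_ne_zero _ (by rw [Ne, ENNReal.ofReal_eq_zero, not_le]; positivity)
  have p4 : ENNReal.ofReal (128 * ν) ^ n ≠ ∞ := ENNReal.pow_ne_top ENNReal.ofReal_ne_top
  refine ENNReal.mul_lt_mul_right p1 p2 ?_
  rw [mul_comm]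
  exact (ENNReal.lt_div_iff_mul_lt (Or.inl p3) (Or.inl p4)).1 h


/-- **Propagation of lower bounds without smallness of the drift** (Lemma 3.2). -/
theorem propagation_of_lower_bounds
    (n : ℕ) (hn : 0 < n) (ν S α : ℝ) (hν : 1 ≤ ν) (hα : 0 < α) :
    ∃ C : ℝ, 0 < C ∧
      ∀ (r ℓ : ℝ) (u : En n × ℝ → ℝ)
        (a : En n × ℝ → Matrix (Fin n) (Fin n) ℝ) (b : En n × ℝ → En n)
        (O : Set (En n × ℝ)),
        0 < r → 0 < ℓ →
        IsOpen O →
        closure (box (0 : En n) r (-(r ^ 2)) ((α - 1) * r ^ 2)) ⊆ O →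
        IsC21 u O →
        UnifParabolic ν a (box (0 : En n) r (-(r ^ 2)) ((α - 1) * r ^ 2)) →
        LxnLtinfPow b (box (0 : En n) r (-(r ^ 2)) ((α - 1) * r ^ 2)) ≤
          ENNReal.ofReal S →
        (∀ X ∈ box (0 : En n) r (-(r ^ 2)) ((α - 1) * r ^ 2),
          -Dt u X + Lop a b u X ≤ 0) →
        (∀ X ∈ box (0 : En n) r (-(r ^ 2)) ((α - 1) * r ^ 2), 0 < u X) →
        (∀ x ∈ ball (0 : En n) r, ℓ ≤ u (x, -(r ^ 2))) →
        (∀ x ∈ ball (0 : En n) (r / 2), C * ℓ ≤ u (x, (α - 1) * r ^ 2)) ∧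
          C * ℓ ≤ u ((0 : En n), (α - 1) * r ^ 2) := by
  set ω : ℝ≥0∞ := volume (ball (0 : En n) 1) with hω
  set ε : ℝ≥0∞ := ω / ENNReal.ofReal (128 * ν) ^ n with hε
  have hωpos : ω ≠ 0 := (measure_ball_pos volume (0 : En n) one_pos).ne'
  have hε0 : ε ≠ 0 := by
    rw [hε, Ne, ENNReal.div_eq_zero_iff, not_or]
    exact ⟨hωpos, ENNReal.pow_ne_top ENNReal.ofReal_ne_top⟩
  obtain ⟨m, hm⟩ := ENNReal.exists_nat_mul_gt hε0 (ENNReal.ofReal_ne_top (r := S))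
  have hm0 : 0 < m := by
    rcases Nat.eq_zero_or_pos m with h | h
    · subst h; simp at hm
    · exact h
  have hmR : (0 : ℝ) < m := by exact_mod_cast hm0
  set K₀ : ℝ := ((n : ℝ) * ν + 1) ^ 2 * ν + 1 with hK₀
  have hK₀pos : 0 < K₀ := by positivity
  refine ⟨9 / 16 * Real.exp (-(256 * K₀ * (m : ℝ) ^ 2 * α)), by positivity, ?_⟩
  intro r ℓ u a b O hr hℓ hO hcl hu ha hb heq hpos hini
  set C := 9 / 16 * Real.exp (-(256 * K₀ * (m : ℝ) ^ 2 * α)) with hC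
  have hC1 : C ≤ 1 := by
    have : Real.exp (-(256 * K₀ * (m : ℝ) ^ 2 * α)) ≤ 1 := by
      rw [Real.exp_le_one_iff, neg_nonpos]; positivity
    rw [hC]; linarith
  set t₀ := -(r ^ 2) with ht₀
  set t₁ := (α - 1) * r ^ 2 with ht₁
  have ht : t₁ - t₀ = α * r ^ 2 := by rw [ht₀, ht₁]; ring
  have htlt : t₀ < t₁ := by
    have : 0 < α * r ^ 2 := by positivity
    linarith
  have hQO : ball (0 : En n) r ×ˢ Icc t₀ t₁ ⊆ O := by
    refine Subset.trans ?_ hcl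
    rw [box, closure_prod_eq, closure_Ioo htlt.ne]
    exact prod_mono_left subset_closure
  set Q := box (0 : En n) r t₀ t₁ with hQdef
  have hQ : IsOpen Q := isOpen_ball.prod isOpen_Ioo
  have hQO' : Q ⊆ O := (prod_mono_right Ioo_subset_Icc_self).trans hQO
  have hLS : ∫⁻ x, hst u ν Q x ^ n ≤ ENNReal.ofReal S := by
    refine le_trans (lintegral_mono fun x => ?_) hb
    exact pow_le_pow_left' (hst_le hu hQ hQO' ν hν ha heq x) n
  obtain ⟨j, hj, hshell⟩ := exists_shell (fun x => hst u ν Q x ^ n) r hr m ε _ hLS hm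
  have hjR : ((j : ℝ) + 1) ≤ m := by exact_mod_cast hj
  set q := r / (2 * (m : ℝ)) with hq
  have hqpos : 0 < q := by positivity
  have hqm : m * q = r / 2 := by rw [hq]; field_simp
  have hjq : ((j : ℝ) + 1) * q ≤ r / 2 := by
    rw [← hqm]; gcongr
  set ρ := q / 8 with hρ
  have hρpos : 0 < ρ := by positivity
  set R := r / 2 + j * q + q / 2 with hRdef
  have hR : R < r := by linarith
  have hj0 : 0 ≤ (j : ℝ) * q := by positivity
  have hball : ∀ z : En n, ‖z‖ = R → closedBall z (2 * ρ) ⊆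
      {x : En n | r / 2 + j * q < ‖x‖ ∧ ‖x‖ < r / 2 + (j + 1) * q} := by
    intro z hz x hx
    rw [mem_closedBall, dist_eq_norm] at hx
    have h1 := norm_sub_norm_le x z
    have h2 := norm_sub_norm_le z x
    rw [norm_sub_rev] at h2
    rw [hz] at h1 h2
    constructor <;> linarith
  have hlat : ∀ x : En n, ‖x‖ = R → ∀ t ∈ Ioo t₀ t₁, C * ℓ ≤ u (x, t) := by
    intro z hz t ht'
    have hsub := hball z hz
    have h1 : ∫⁻ x in ball z (2 * ρ), hst u ν Q x ^ n < ε :=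
      (lintegral_mono_set (ball_subset_closedBall.trans hsub)).trans_lt hshell
    have h2 := small_of_lt z hν hρpos _ (measurable_hst hu hQ hQO' ν hν) h1
    have h3 := local_bound hn hO hu hQO hν ha heq hpos hℓ hini hρpos (by
      intro x hx
      have := (hsub hx).2
      rw [mem_ball, dist_zero_right]
      linarith) h2 ht'
    rw [← hK₀] at h3
    have hzball : (z, t) ∈ Q := by
      refine ⟨?_, ht'⟩
      rw [mem_ball, dist_zero_right, hz]
      exact hR
    have hupos := hpos _ hzball
    have h4 : K₀ / ρ ^ 2 * (t - t₀) ≤ 256 * K₀ * (m : ℝ) ^ 2 * α := by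
      have h5 : K₀ / ρ ^ 2 * (t - t₀) ≤ K₀ / ρ ^ 2 * (α * r ^ 2) := by
        gcongr
        linarith [ht'.2]
      refine h5.trans_eq ?_
      rw [hρ, hq]
      field_simp
      norm_num
    have h6 : 9 / 16 * ℓ ≤ u (z, t) * Real.exp (256 * K₀ * (m : ℝ) ^ 2 * α) :=
      h3.trans (by gcongr)
    rw [hC, Real.exp_neg]
    have h7 := Real.exp_pos (256 * K₀ * (m : ℝ) ^ 2 * α)
    rw [show 9 / 16 * (Real.exp (256 * K₀ * (m : ℝ) ^ 2 * α))⁻¹ * ℓ =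
      (9 / 16 * ℓ) / Real.exp (256 * K₀ * (m : ℝ) ^ 2 * α) by rw [div_eq_mul_inv]; ring]
    rwa [div_le_iff₀ h7]
  have hin : ∀ x ∈ ball (0 : En n) (r / 2), ∀ t ∈ Ioo t₀ t₁, C * ℓ ≤ u (x, t) := by
    intro x hx t ht'
    refine min_principle hO hu hQO hν ha heq hR ?_ hlat ?_ ht'
    · intro y hy
      have := hini y (closedBall_subset_ball hR hy)
      nlinarith
    · rw [mem_ball] at hx
      rw [mem_closedBall]
      linarith
  have hfin : ∀ x ∈ ball (0 : En n) (r / 2), C * ℓ ≤ u (x, t₁) := by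
    intro x hx
    have hxO : (x, t₁) ∈ O := hQO ⟨ball_subset_ball (by linarith) hx, htlt.le, le_rfl⟩
    have hcx : ContinuousAt (fun t => u (x, t)) t₁ := (hu.diff_t _ hxO).continuousAt
    refine ge_of_tendsto (hcx.tendsto.mono_left (nhdsWithin_le_nhds (s := Iio t₁))) ?_
    filter_upwards [Ioo_mem_nhdsLT htlt] with t ht'
    exact hin x hx t ht'
  exact ⟨hfin, hfin 0 (mem_ball_self (by positivity))⟩
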